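/- Let $s\ge 1$, let $U\subset\mathbb{R}^s$ be convex, open and bounded, and let $\mathbb{U}$ be a probability measure on $U$ with a density $f_{\mathbb{U}}:U\to[0,C'_{\mathbb{U}}]$ with respect to Lebesgue measure, for some $C'_{\mathbb{U}}>0$. For $\nu,\eta,l>0$ let $$k_{\nu,\eta,l}(u,v)=\frac{\eta}{\Gamma(\nu)2^{\nu-1}}\Big(\frac{\sqrt{2\nu}\,\|u-v\|_2}{l}\Big)^{\nu}K_\nu\Big(\frac{\sqrt{2\nu}\,\|u-v\|_2}{l}\Big)\quad(u\ne v),\qquad k_{\nu,\eta,l}(u,u)=\eta,$$ be the Matérn kernel of order $\nu$ with amplitude $\eta$ and lengthscale $l$, where $K_\nu$ is the modified Bessel function of the second kind. Let $\nu_c>0$, and for every $\beta$ in a parameter space $B$ let $c_\beta=k_{\nu_c,\eta_\beta,l_\beta}$ be a Matérn kernel on $U$ of the same order $\nu_c$, where the amplitudes and lengthscales satisfy $0<\eta_\beta\le\eta_{\max}$ and $0<l_{\min}\le l_\beta\le l_{\max}$ for all $\beta\in B$, with constants $\eta_{\max},l_{\min},l_{\max}$ independent of $\beta$. Let $M\ge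 1$, and for every integer $m\ge M$ let $u_1,\dots,u_m\in U$ be pairwise distinct points (which may depend on $m$) whose fill distance satisfies $$h_m=\sup_{u\in U}\min_{1\le i\le m}\|u-u_i\|_2=O(m^{-1/s})\quad(m\to\infty),$$ let $\beta_m\in B$, and let $w=(w_1,\dots,w_m)=C^{-1}z$ be the optimal weights of the kernel $c_{\beta_m}$ and the measure $\mathbb{U}$, where $C_{ij}=c_{\beta_m}(u_i,u_j)$ and $z_i=\int_U c_{\beta_m}(u_i,u)\,d\mathbb{U}(u)$. Then there is a constant $C_0$, independent of $m$, $\beta$ and $f$, such that for every $m\ge M$, every $\beta\in B$ (in particular $\beta=\beta_m$) and every $f$ in the reproducing kernel Hilbert space $\mathcal{H}_{c_\beta}$ of $c_\beta$ on $U$ with $\|f\|_{\mathcal{H}_{c_\beta}}=1$, the function $f$ is $\mathbb{U}$-integrable and $$\Big|\int_U f(u)\,d\mathbb{U}(u)-\sum_{i=1}^m w_i f(u_i)\Big|\le C_0\,m^{-\nu_c/s-1/2}.$$ -/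

import Mathlib

open MeasureTheory Asymptotics Filter

/-- The modified Bessel function of the second kind `K_ν(x)`, for `x > 0`, by the classical formula
`K_ν(x) = ∫₀^∞ exp(-x cosh t) cosh(ν t) dt`. -/
noncomputable def besselK (ν x : ℝ) : ℝ :=
  ∫ t in Set.Ioi (0 : ℝ), Real.exp (-(x * Real.cosh t)) * Real.cosh (ν * t)

open scoped Classical in
/-- The Matérn kernel of order `ν > 0` with amplitude `η > 0` and lengthscale `l > 0`. On the
diagonal, where the formula reads `0 * ∞`, it takes its limit value `η`. -/
noncomputable def maternKernel {s : ℕ} (ν η l : ℝ) (x y : EuclideanSpace ℝ (Fin s)) : ℝ :=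
  if x = y then η
  else (η / (Real.Gamma ν * (2 : ℝ) ^ (ν - 1))) *
    (Real.sqrt (2 * ν) * ‖x - y‖ / l) ^ ν * besselK ν (Real.sqrt (2 * ν) * ‖x - y‖ / l)

/-- The Matérn kernel as a kernel on a subset `U` of `ℝˢ`. -/
noncomputable def maternKernelOn {s : ℕ} (U : Set (EuclideanSpace ℝ (Fin s))) (ν η l : ℝ)
    (x y : U) : ℝ :=
  maternKernel ν η l (x : EuclideanSpace ℝ (Fin s)) (y : EuclideanSpace ℝ (Fin s))

/-- The real reproducing kernel Hilbert space `H` of functions on `X` is the one of the kernel `c`.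
(Mathlib's kernel has values in the operators on the scalars `ℝ`; evaluating at `1` gives the
scalar kernel.) -/
def HasReproducingKernel {X : Type*} (H : Type*) [NormedAddCommGroup H] [InnerProductSpace ℝ H]
    [CompleteSpace H] [RKHS ℝ H X ℝ] (c : X → X → ℝ) : Prop :=
  ∀ x y : X, RKHS.kernel H x y (1 : ℝ) = c x y

/-- The fill distance `sup_{v ∈ U} min_i ‖v - u_i‖` of finitely many points `u_i` of `U`. -/
noncomputable def fillDistance {s m : ℕ} (U : Set (EuclideanSpace ℝ (Fin s)))
    (u : Fin m → U) : ℝ :=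
  ⨆ v : U, ⨅ i : Fin m,
    ‖(v : EuclideanSpace ℝ (Fin s)) - (u i : EuclideanSpace ℝ (Fin s))‖

/-- The optimal quadrature weights `C⁻¹ z`, where `C i j = c (u i) (u j)` and
`z i = ∫ c (u i) v d𝕌(v)`. -/
noncomputable def optimalWeights {X : Type*} [MeasurableSpace X] {m : ℕ} (c : X → X → ℝ)
    (𝕌 : Measure X) (u : Fin m → X) : Fin m → ℝ :=
  (Matrix.of fun i j => c (u i) (u j))⁻¹.mulVec fun i => ∫ v, c (u i) v ∂𝕌

/-!
The Matérn kernel of order `ν` is `η` times a mixture of Gaussian kernels `exp (-‖x - y‖² / σ)`, the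
squared width `σ` following a gamma distribution of shape `ν` and rate `a = ν / (2 l²)`. In a
reproducing kernel Hilbert space the squared worst-case error of a quadrature rule is its energy,
the error functional applied to both arguments of the kernel, so only energies have to be bounded.

* Gaussian energies are integrals of squared moduli of characteristic functions; hence they are
  nonnegative, and changing the rate `a` within a compact range changes the mixed energies by a
  bounded factor. This makes the estimate uniform in the parameters, and since the optimal weights
  minimize the energy of their own kernel, it suffices to find one good rule for a single rate.
* A good rule is assembled from local rules on cells of diameter `O(h)`, `h` the fill distance,
  which are exact for polynomials of a fixed high degree. If `σ ≥ h²`, the Taylor expansion of the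
  Gaussian in the squared distance shows that two such rules at distance `d` interact by at most
  `O((h² / σ)^κ exp (-d² / (2 σ)))`; if `σ < h²`, the trivial bound suffices. Summing over the cells
  of a measure with bounded density and integrating over `σ` gives an energy `O(h^(2 ν + s))`.
-/

section GammaDistribution

open ProbabilityTheory

lemma integral_gammaMeasure {ν a : ℝ} (hν : 0 < ν) (ha : 0 < a) (f : ℝ → ℝ) :
    ∫ σ, f σ ∂(gammaMeasure ν a) =
      ∫ σ in Set.Ioi (0 : ℝ),
        a ^ ν / Real.Gamma ν * σ ^ (ν - 1) * Real.exp (-(a * σ)) * f σ := by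
  have integral_eq_integral_pdf :
      ∫ σ, f σ ∂(gammaMeasure ν a) = ∫ σ, gammaPDFReal ν a σ * f σ := by
    rw [gammaMeasure, integral_withDensity_eq_integral_toReal_smul (f := gammaPDF ν a)
      (measurable_gammaPDFReal ν a).ennreal_ofReal (ae_of_all _ fun σ => ENNReal.ofReal_lt_top)]
    simp [gammaPDF, ENNReal.toReal_ofReal (gammaPDFReal_nonneg hν ha _)]
  rw [integral_eq_integral_pdf, ← integral_Ici_eq_integral_Ioi,
    ← integral_indicator measurableSet_Ici]
  refine integral_congr_ae (ae_of_all _ fun σ => ?_)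
  by_cases h : 0 ≤ σ <;> simp [gammaPDFReal, Set.indicator, h]

lemma ae_pos_gammaMeasure (ν a : ℝ) : ∀ᵐ σ ∂(gammaMeasure ν a), 0 < σ := by
  have compl_pos : {σ : ℝ | ¬ 0 < σ} = Set.Iic 0 := by ext; simp
  rw [ae_iff, compl_pos, gammaMeasure, withDensity_apply _ measurableSet_Iic,
    ← setLIntegral_congr (Iio_ae_eq_Iic (a := (0 : ℝ)) (μ := volume))]
  exact lintegral_gammaPDF_of_nonpos le_rfl

lemma integrableOn_rpow_mul_exp_mul {ν a A : ℝ} (hν : 0 < ν) (ha : 0 < a) {f : ℝ → ℝ}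
    (hf : Measurable f) (hfA : ∀ σ, 0 < σ → |f σ| ≤ A) :
    IntegrableOn (fun σ : ℝ => σ ^ (ν - 1) * Real.exp (-(a * σ)) * f σ) (Set.Ioi 0) := by
  have weight_integrable :
      IntegrableOn (fun σ : ℝ => σ ^ (ν - 1) * Real.exp (-(a * σ))) (Set.Ioi 0) := by
    simpa using integrableOn_rpow_mul_exp_neg_mul_rpow (s := ν - 1) (p := 1) (by linarith)
      one_pos ha
  refine weight_integrable.mul_bdd hf.aestronglyMeasurable (c := A) ?_
  filter_upwards [ae_restrict_mem measurableSet_Ioi] with σ hσ using hfA σ hσ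

end GammaDistribution

section BesselK

lemma image_const_mul_exp {c : ℝ} (hc : 0 < c) :
    (fun t => c * Real.exp t) '' Set.univ = Set.Ioi 0 := by
  rw [← Set.image_image (c * ·) Real.exp, Set.image_univ, Real.range_exp,
    Set.image_mul_left_Ioi hc, mul_zero]

lemma hasDerivWithinAt_const_mul_exp (c t : ℝ) :
    HasDerivWithinAt (fun t => c * Real.exp t) (c * Real.exp t) Set.univ t :=
  ((Real.hasDerivAt_exp t).const_mul c).hasDerivWithinAt

lemma injOn_const_mul_exp {c : ℝ} (hc : 0 < c) :
    Set.InjOn (fun t => c * Real.exp t) Set.univ := fun _ _ _ _ h =>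
  Real.exp_injective (mul_left_cancel₀ hc.ne' h)

lemma integral_Ioi_eq_integral_const_mul_exp {c : ℝ} (hc : 0 < c) (F : ℝ → ℝ) :
    ∫ σ in Set.Ioi (0 : ℝ), F σ = ∫ t, c * Real.exp t * F (c * Real.exp t) := by
  rw [← image_const_mul_exp hc, integral_image_eq_integral_abs_deriv_smul MeasurableSet.univ
    (fun t _ => hasDerivWithinAt_const_mul_exp c t) (injOn_const_mul_exp hc), setIntegral_univ]
  simp only [smul_eq_mul, abs_of_pos (mul_pos hc (Real.exp_pos _))]

lemma integrableOn_Ioi_iff_integrable_const_mul_exp {c : ℝ} (hc : 0 < c) (F : ℝ → ℝ) :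
    IntegrableOn F (Set.Ioi 0) ↔ Integrable fun t => c * Real.exp t * F (c * Real.exp t) := by
  rw [← image_const_mul_exp hc, integrableOn_image_iff_integrableOn_abs_deriv_smul
    MeasurableSet.univ (fun t _ => hasDerivWithinAt_const_mul_exp c t) (injOn_const_mul_exp hc),
    integrableOn_univ]
  simp only [smul_eq_mul, abs_of_pos (mul_pos hc (Real.exp_pos _))]

lemma integral_exp_neg_mul_cosh_mul_exp {ν x : ℝ}
    (h : Integrable fun t => Real.exp (-(x * Real.cosh t)) * Real.exp (ν * t)) :
    ∫ t, Real.exp (-(x * Real.cosh t)) * Real.exp (ν * t) = 2 * besselK ν x := by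
  rw [← intervalIntegral.integral_Iic_add_Ioi (b := (0 : ℝ)) h.integrableOn h.integrableOn,
    ← neg_zero, ← integral_comp_neg_Ioi, neg_zero,
    ← integral_add h.comp_neg.integrableOn h.integrableOn, besselK, ← integral_const_mul]
  refine integral_congr_ae (ae_of_all _ fun t => ?_)
  simp only [Real.cosh_neg, Real.cosh_eq (ν * t), mul_neg]
  ring

/- The rate of the gamma density is written `q ^ 2`. In the variable `t` of `σ = r / q * exp t`, the
exponent `q ^ 2 * σ + r ^ 2 / σ` becomes `2 * q * r * cosh t`. -/
lemma const_mul_exp_mul_rpow_mul_exp_mul_exp {q r : ℝ} (hq : 0 < q) (hr : 0 < r) (ν t : ℝ) :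
    r / q * Real.exp t * ((r / q * Real.exp t) ^ (ν - 1) *
        Real.exp (-(q ^ 2 * (r / q * Real.exp t))) * Real.exp (-(r ^ 2 / (r / q * Real.exp t)))) =
      (r / q) ^ ν * (Real.exp (-(2 * q * r * Real.cosh t)) * Real.exp (ν * t)) := by
  have hσ : 0 < r / q * Real.exp t := by positivity
  have exponent_eq : q ^ 2 * (r / q * Real.exp t) + r ^ 2 / (r / q * Real.exp t) =
      2 * q * r * Real.cosh t := by
    rw [Real.cosh_eq, Real.exp_neg]
    field_simp
  have power_eq : r / q * Real.exp t * (r / q * Real.exp t) ^ (ν - 1) =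
      (r / q) ^ ν * Real.exp (ν * t) := by
    rw [Real.rpow_sub_one hσ.ne', mul_div_cancel₀ _ hσ.ne',
      Real.mul_rpow (by positivity) (Real.exp_pos t).le, ← Real.exp_mul, mul_comm t]
  rw [mul_assoc ((r / q * Real.exp t) ^ (ν - 1)), ← Real.exp_add, ← neg_add, exponent_eq,
    ← mul_assoc, power_eq]
  ring

lemma besselK_eq_integral_rpow {ν q r : ℝ} (hν : 0 < ν) (hq : 0 < q) (hr : 0 < r) :
    besselK ν (2 * q * r) = 1 / 2 * (r / q) ^ (-ν) *
      ∫ σ in Set.Ioi (0 : ℝ), σ ^ (ν - 1) * Real.exp (-(q ^ 2 * σ)) * Real.exp (-(r ^ 2 / σ)) := by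
  have hc : 0 < r / q := by positivity
  have hcν : (r / q) ^ ν ≠ 0 := (Real.rpow_pos_of_pos hc ν).ne'
  have integrable_σ : IntegrableOn
      (fun σ : ℝ => σ ^ (ν - 1) * Real.exp (-(q ^ 2 * σ)) * Real.exp (-(r ^ 2 / σ)))
      (Set.Ioi 0) :=
    integrableOn_rpow_mul_exp_mul (A := 1) hν (by positivity) (by fun_prop) fun σ hσ => by
      rw [Real.abs_exp, Real.exp_le_one_iff, neg_nonpos]
      positivity
  rw [integrableOn_Ioi_iff_integrable_const_mul_exp hc] at integrable_σ
  rw [integral_Ioi_eq_integral_const_mul_exp hc]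
  simp only [const_mul_exp_mul_rpow_mul_exp_mul_exp hq hr] at integrable_σ ⊢
  rw [integral_const_mul, integral_exp_neg_mul_cosh_mul_exp
    ((integrable_const_mul_iff (isUnit_iff_ne_zero.2 hcν) _).1 integrable_σ), Real.rpow_neg hc.le]
  field_simp

end BesselK

section GammaMixture

/-- The Gaussian kernel `exp (-‖x - y‖² / σ)`, parametrized by its squared width `σ`. -/
noncomputable def gaussKernel {E : Type*} [NormedAddCommGroup E] (σ : ℝ) (x y : E) : ℝ :=
  Real.exp (-(‖x - y‖ ^ 2 / σ))

/-- The mixture of the Gaussian kernels whose squared width follows the gamma distribution of shape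
`ν` and rate `a`. Up to the amplitude, the Matérn kernels of order `ν` are of this form. -/
noncomputable def gammaMixKernel {E : Type*} [NormedAddCommGroup E] (ν a : ℝ) (x y : E) : ℝ :=
  ∫ σ, gaussKernel σ x y ∂(ProbabilityTheory.gammaMeasure ν a)

lemma gammaMixKernel_self {E : Type*} [NormedAddCommGroup E] {ν a : ℝ} (hν : 0 < ν) (ha : 0 < a)
    (x : E) : gammaMixKernel ν a x x = 1 := by
  have := ProbabilityTheory.isProbabilityMeasure_gammaMeasure hν ha
  simp [gammaMixKernel, gaussKernel]

lemma gammaMixKernel_sq_eq_besselK {E : Type*} [NormedAddCommGroup E] {ν q : ℝ} (hν : 0 < ν)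
    (hq : 0 < q) {x y : E} (hxy : x ≠ y) :
    gammaMixKernel ν (q ^ 2) x y = 1 / (Real.Gamma ν * 2 ^ (ν - 1)) *
      (2 * q * ‖x - y‖) ^ ν * besselK ν (2 * q * ‖x - y‖) := by
  have hr : 0 < ‖x - y‖ := norm_pos_iff.2 (sub_ne_zero.2 hxy)
  rw [besselK_eq_integral_rpow hν hq hr, gammaMixKernel, integral_gammaMeasure hν (by positivity)]
  simp only [gaussKernel, mul_assoc]
  rw [integral_const_mul, Real.mul_rpow zero_le_two (by positivity), Real.mul_rpow hq.le hr.le,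
    Real.rpow_neg (by positivity), Real.div_rpow hr.le hq.le, sq, Real.mul_rpow hq.le hq.le,
    Real.rpow_sub_one two_ne_zero]
  field_simp

lemma maternKernel_eq_gammaMixKernel {s : ℕ} {ν l : ℝ} (hν : 0 < ν) (hl : 0 < l) (η : ℝ)
    (x y : EuclideanSpace ℝ (Fin s)) :
    maternKernel ν η l x y = η * gammaMixKernel ν (ν / (2 * l ^ 2)) x y := by
  by_cases hxy : x = y
  · simp [maternKernel, hxy, gammaMixKernel_self hν (show 0 < ν / (2 * l ^ 2) by positivity)]
  · have rate_eq_sq : ν / (2 * l ^ 2) = (Real.sqrt (2 * ν) / (2 * l)) ^ 2 := by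
      rw [div_pow, Real.sq_sqrt (by positivity)]
      field_simp
    have argument_eq : 2 * (Real.sqrt (2 * ν) / (2 * l)) * ‖x - y‖ =
        Real.sqrt (2 * ν) * ‖x - y‖ / l := by field_simp
    rw [maternKernel, if_neg hxy, rate_eq_sq,
      gammaMixKernel_sq_eq_besselK hν (by positivity) hxy, argument_eq]
    ring

end GammaMixture

section QuadratureError

variable {X Ω ι κ : Type*} [MeasurableSpace X] [MeasurableSpace Ω] [Fintype ι]

/-- The error, on the integrand `g`, of the quadrature rule with weights `w` and nodes `u` for the
measure `P`. The zero measure is allowed, and gives minus the discrete functional. -/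
noncomputable def quadErr (P : Measure X) (w : ι → ℝ) (u : ι → X) (g : X → ℝ) : ℝ :=
  ∫ x, g x ∂P - ∑ i, w i * g (u i)

/-- The energy of a quadrature rule: its error functional applied to both arguments of a kernel `F`.
It is the squared worst-case error of the rule in the reproducing kernel Hilbert space of `F`. -/
noncomputable def quadEnergy (P : Measure X) (w : ι → ℝ) (u : ι → X) (F : X → X → ℝ) : ℝ :=
  quadErr P w u fun x => quadErr P w u fun y => F x y

variable (P : Measure X) (w : ι → ℝ) (u : ι → X)

lemma quadErr_const_mul (c : ℝ) (g : X → ℝ) :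
    quadErr P w u (fun x => c * g x) = c * quadErr P w u g := by
  simp only [quadErr, integral_const_mul, mul_sub, Finset.mul_sum, mul_left_comm]

lemma quadErr_mul_const (c : ℝ) (g : X → ℝ) :
    quadErr P w u (fun x => g x * c) = quadErr P w u g * c := by
  simp only [mul_comm _ c, quadErr_const_mul]

lemma quadEnergy_const_mul (c : ℝ) (F : X → X → ℝ) :
    quadEnergy P w u (fun x y => c * F x y) = c * quadEnergy P w u F := by
  simp only [quadEnergy, quadErr_const_mul]

variable {P}

lemma quadErr_add {f g : X → ℝ} (hf : Integrable f P) (hg : Integrable g P) :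
    quadErr P w u (fun x => f x + g x) = quadErr P w u f + quadErr P w u g := by
  simp only [quadErr, integral_add hf hg, mul_add, Finset.sum_add_distrib]
  ring

lemma quadErr_sub {f g : X → ℝ} (hf : Integrable f P) (hg : Integrable g P) :
    quadErr P w u (fun x => f x - g x) = quadErr P w u f - quadErr P w u g := by
  simp only [quadErr, integral_sub hf hg, mul_sub, Finset.sum_sub_distrib]
  ring

lemma quadErr_finsetSum (s : Finset κ) {f : κ → X → ℝ}
    (hf : ∀ k ∈ s, Integrable (f k) P) :
    quadErr P w u (fun x => ∑ k ∈ s, f k x) = ∑ k ∈ s, quadErr P w u (f k) := by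
  simp only [quadErr, integral_finsetSum s hf, Finset.mul_sum, Finset.sum_sub_distrib]
  rw [Finset.sum_comm (s := s)]

lemma quadEnergy_mul_add_mul {p q : X → ℝ} (hp : Integrable p P) (hq : Integrable q P) :
    quadEnergy P w u (fun x y => p x * p y + q x * q y) =
      quadErr P w u p ^ 2 + quadErr P w u q ^ 2 := by
  have inner_eq (x : X) : quadErr P w u (fun y => p x * p y + q x * q y) =
      p x * quadErr P w u p + q x * quadErr P w u q := by
    rw [quadErr_add w u (hp.const_mul _) (hq.const_mul _), quadErr_const_mul, quadErr_const_mul]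
  simp only [quadEnergy, inner_eq]
  rw [quadErr_add w u (hp.mul_const _) (hq.mul_const _), quadErr_mul_const, quadErr_mul_const]
  ring

variable (P)

lemma quadEnergy_zero_measure (F : X → X → ℝ) :
    quadEnergy 0 w u F = ∑ i, w i * ∑ j, w j * F (u i) (u j) := by
  simp [quadEnergy, quadErr]

lemma quadErr_eq_add_quadErr_zero_measure (w' : ι → ℝ) (g : X → ℝ) :
    quadErr P w' u g = quadErr P w u g + quadErr 0 (w' - w) u g := by
  simp [quadErr, sub_mul, Finset.sum_sub_distrib]

lemma quadErr_map {Y : Type*} [MeasurableSpace Y] {φ : X → Y} (hφ : MeasurableEmbedding φ)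
    (g : Y → ℝ) : quadErr (P.map φ) w (φ ∘ u) g = quadErr P w u (g ∘ φ) := by
  simp only [quadErr, hφ.integral_map, Function.comp_apply]

lemma quadEnergy_map {Y : Type*} [MeasurableSpace Y] {φ : X → Y} (hφ : MeasurableEmbedding φ)
    (F : Y → Y → ℝ) :
    quadEnergy (P.map φ) w (φ ∘ u) F = quadEnergy P w u fun x y => F (φ x) (φ y) := by
  simp only [quadEnergy, quadErr_map P w u hφ]
  rfl

/-- The total mass of the functional `quadErr P w u`. -/
noncomputable def quadMass (P : Measure X) (w : ι → ℝ) : ℝ :=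
  P.real Set.univ + ∑ i, |w i|

lemma abs_quadErr_le [IsFiniteMeasure P] {g : X → ℝ} {A : ℝ} (hP : ∀ᵐ x ∂P, |g x| ≤ A)
    (hu : ∀ i, w i ≠ 0 → |g (u i)| ≤ A) :
    |quadErr P w u g| ≤ quadMass P w * A := by
  have integral_le : |∫ x, g x ∂P| ≤ A * P.real Set.univ :=
    norm_integral_le_of_norm_le_const (f := g) hP
  have sum_le : |∑ i, w i * g (u i)| ≤ (∑ i, |w i|) * A := by
    rw [Finset.sum_mul]
    refine (Finset.abs_sum_le_sum_abs _ _).trans (Finset.sum_le_sum fun i _ => ?_)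
    rw [abs_mul]
    rcases eq_or_ne (w i) 0 with hi | hi
    · simp [hi]
    · exact mul_le_mul_of_nonneg_left (hu i hi) (abs_nonneg _)
  calc |quadErr P w u g| ≤ |∫ x, g x ∂P| + |∑ i, w i * g (u i)| := abs_sub _ _
    _ ≤ A * P.real Set.univ + (∑ i, |w i|) * A := add_le_add integral_le sum_le
    _ = quadMass P w * A := by rw [quadMass]; ring

lemma abs_quadEnergy_le [IsFiniteMeasure P] {F : X → X → ℝ} {A : ℝ} (hF : ∀ x y, |F x y| ≤ A) :
    |quadEnergy P w u F| ≤ quadMass P w ^ 2 * A := by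
  have inner_le (x : X) : |quadErr P w u (F x)| ≤ quadMass P w * A :=
    abs_quadErr_le P w u (ae_of_all _ (hF x)) fun i _ => hF x (u i)
  rw [sq, mul_assoc]
  exact abs_quadErr_le P w u (ae_of_all _ inner_le) fun i _ => inner_le (u i)

lemma measurable_quadErr [SFinite P] {g : Ω → X → ℝ} (hg : Measurable (Function.uncurry g)) :
    Measurable fun ω => quadErr P w u (g ω) := by
  have measurable_integral : Measurable fun ω => ∫ x, g ω x ∂P :=
    hg.stronglyMeasurable.integral_prod_right.measurable
  exact measurable_integral.sub (Finset.measurable_sum _ fun i _ =>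
    (hg.comp (measurable_id.prodMk measurable_const)).const_mul _)

lemma measurable_quadEnergy [SFinite P] {F : Ω → X → X → ℝ}
    (hF : Measurable fun p : (Ω × X) × X => F p.1.1 p.1.2 p.2) :
    Measurable fun ω => quadEnergy P w u (F ω) :=
  measurable_quadErr P w u (g := fun ω x => quadErr P w u (F ω x))
    (measurable_quadErr P w u (g := fun (p : Ω × X) y => F p.1 p.2 y) hF)

lemma integrable_quadErr [IsFiniteMeasure P] {F : X → X → ℝ}
    (hF : Measurable (Function.uncurry F)) {A : ℝ} (hA : ∀ x y, |F x y| ≤ A) (Q : Measure X)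
    [IsFiniteMeasure Q] : Integrable (fun x => quadErr P w u (F x)) Q :=
  .of_bound (measurable_quadErr P w u hF).aestronglyMeasurable (quadMass P w * A)
    (ae_of_all _ fun x => abs_quadErr_le P w u (ae_of_all _ (hA x)) fun i _ => hA x (u i))

variable {τ : Measure Ω}

lemma quadErr_integral_comm [SFinite τ] [IsFiniteMeasure P] {g : Ω → X → ℝ}
    (hg : Measurable (Function.uncurry g)) {b : Ω → ℝ} (hb : Integrable b τ)
    (hgb : ∀ᵐ ω ∂τ, ∀ x, |g ω x| ≤ b ω) :
    quadErr P w u (fun x => ∫ ω, g ω x ∂τ) = ∫ ω, quadErr P w u (g ω) ∂τ := by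
  have integrable_uncurry : Integrable (Function.uncurry g) (τ.prod P) := by
    refine Integrable.mono' (hb.comp_fst P) hg.aestronglyMeasurable ?_
    filter_upwards [(Measure.quasiMeasurePreserving_fst (μ := τ) (ν := P)).ae hgb] with p hp
      using hp p.2
  have integrable_integral : Integrable (fun ω => ∫ x, g ω x ∂P) τ :=
    integrable_uncurry.integral_prod_left
  have integrable_section (x : X) : Integrable (fun ω => g ω x) τ := by
    refine Integrable.mono' hb
      (hg.comp (measurable_id.prodMk measurable_const)).aestronglyMeasurable ?_
    filter_upwards [hgb] with ω hω using hω x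
  unfold quadErr
  rw [integral_sub integrable_integral
      (integrable_finsetSum _ fun i _ => (integrable_section (u i)).const_mul (w i)),
    integral_finsetSum _ fun i _ => (integrable_section (u i)).const_mul (w i),
    integral_integral_swap integrable_uncurry]
  simp only [integral_const_mul]

lemma quadEnergy_integral_comm [SFinite τ] [IsFiniteMeasure P] {F : Ω → X → X → ℝ}
    (hF : Measurable fun p : (Ω × X) × X => F p.1.1 p.1.2 p.2) {b : Ω → ℝ} (hb : Integrable b τ)
    (hFb : ∀ᵐ ω ∂τ, ∀ x y, |F ω x y| ≤ b ω) :
    quadEnergy P w u (fun x y => ∫ ω, F ω x y ∂τ) = ∫ ω, quadEnergy P w u (F ω) ∂τ := by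
  have inner_comm (x : X) :
      quadErr P w u (fun y => ∫ ω, F ω x y ∂τ) = ∫ ω, quadErr P w u (F ω x) ∂τ :=
    quadErr_integral_comm P w u
      (hF.comp ((measurable_fst.prodMk measurable_const).prodMk measurable_snd)) hb
      (by filter_upwards [hFb] with ω h y using h x y)
  have inner_le : ∀ᵐ ω ∂τ, ∀ x, |quadErr P w u (F ω x)| ≤ quadMass P w * b ω := by
    filter_upwards [hFb] with ω hω x
    exact abs_quadErr_le P w u (ae_of_all _ (hω x)) fun i _ => hω x _
  simp only [quadEnergy, inner_comm]
  exact quadErr_integral_comm P w u (g := fun ω x => quadErr P w u (F ω x))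
    (measurable_quadErr P w u (g := fun (p : Ω × X) y => F p.1 p.2 y) hF) (hb.const_mul _) inner_le

lemma integrable_quadEnergy [IsFiniteMeasure P] {F : Ω → X → X → ℝ}
    (hF : Measurable fun p : (Ω × X) × X => F p.1.1 p.1.2 p.2) {b : Ω → ℝ} (hb : Integrable b τ)
    (hFb : ∀ᵐ ω ∂τ, ∀ x y, |F ω x y| ≤ b ω) :
    Integrable (fun ω => quadEnergy P w u (F ω)) τ := by
  refine (hb.const_mul (quadMass P w ^ 2)).mono'
    (measurable_quadEnergy P w u hF).aestronglyMeasurable ?_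
  filter_upwards [hFb] with ω hω using abs_quadEnergy_le P w u hω

variable {P} [Fintype κ]

lemma quadErr_eq_sum_restrict {D : κ → Set X} (hDm : ∀ k, MeasurableSet (D k))
    (hDd : Pairwise (Function.onFun Disjoint D)) (hDP : ∀ᵐ x ∂P, x ∈ ⋃ k, D k)
    (w : κ → ι → ℝ) {g : X → ℝ} (hg : Integrable g P) :
    quadErr P (fun i => ∑ k, w k i) u g = ∑ k, quadErr (P.restrict (D k)) (w k) u g := by
  have integral_eq_sum : ∫ x, g x ∂P = ∑ k, ∫ x in D k, g x ∂P := by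
    rw [← integral_iUnion_fintype hDm hDd fun k => hg.integrableOn,
      Measure.restrict_eq_self_of_ae_mem hDP]
  simp only [quadErr, Finset.sum_sub_distrib, integral_eq_sum, Finset.sum_mul]
  rw [Finset.sum_comm]

lemma quadEnergy_eq_sum_restrict [IsFiniteMeasure P] {D : κ → Set X}
    (hDm : ∀ k, MeasurableSet (D k)) (hDd : Pairwise (Function.onFun Disjoint D))
    (hDP : ∀ᵐ x ∂P, x ∈ ⋃ k, D k) (w : κ → ι → ℝ) {F : X → X → ℝ}
    (hF : Measurable (Function.uncurry F)) {A : ℝ} (hA : ∀ x y, |F x y| ≤ A) :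
    quadEnergy P (fun i => ∑ k, w k i) u F =
      ∑ k, ∑ k', quadErr (P.restrict (D k)) (w k) u fun x =>
        quadErr (P.restrict (D k')) (w k') u fun y => F x y := by
  have inner_eq_sum (x : X) : quadErr P (fun i => ∑ k, w k i) u (F x) =
      ∑ k', quadErr (P.restrict (D k')) (w k') u (F x) :=
    quadErr_eq_sum_restrict u hDm hDd hDP w
      (.of_bound hF.of_uncurry_left.aestronglyMeasurable A (ae_of_all _ (hA x)))
  rw [quadEnergy, quadErr_eq_sum_restrict u hDm hDd hDP w (integrable_quadErr P _ u hF hA P)]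
  refine Finset.sum_congr rfl fun k _ => ?_
  rw [funext inner_eq_sum]
  exact quadErr_finsetSum _ _ _ fun k' _ => integrable_quadErr _ _ u hF hA _

end QuadratureError

section OptimalWeights

variable {X : Type*} [MeasurableSpace X] {m : ℕ} {c : X → X → ℝ}

lemma quadErr_optimalWeights_eq_zero (P : Measure X) {u : Fin m → X}
    (hdet : (Matrix.of fun i j => c (u i) (u j)).det ≠ 0) (i : Fin m) :
    quadErr P (optimalWeights c P u) u (c (u i)) = 0 := by
  have mulVec_optimalWeights : (Matrix.of fun i j => c (u i) (u j)).mulVec (optimalWeights c P u) =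
      fun i => ∫ v, c (u i) v ∂P := by
    rw [optimalWeights, Matrix.mulVec_mulVec,
      Matrix.mul_nonsing_inv _ (isUnit_iff_ne_zero.2 hdet), Matrix.one_mulVec]
  rw [quadErr, ← congr_fun mulVec_optimalWeights i, sub_eq_zero]
  simp only [Matrix.mulVec, dotProduct, Matrix.of_apply, mul_comm]

/- The Pythagorean identity in the reproducing kernel Hilbert space of `c`. -/
lemma quadEnergy_eq_add_of_quadErr_eq_zero {ι : Type*} [Fintype ι] (P : Measure X)
    [IsFiniteMeasure P] {w : ι → ℝ} (w' : ι → ℝ) {u : ι → X}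
    (hc : Measurable (Function.uncurry c)) {A : ℝ} (hA : ∀ x y, |c x y| ≤ A)
    (hsymm : ∀ x y, c x y = c y x) (hw : ∀ i, quadErr P w u (c (u i)) = 0) :
    quadEnergy P w' u c = quadEnergy P w u c + quadEnergy 0 (w' - w) u c := by
  have nodal_part_eq (x : X) :
      quadErr 0 (w' - w) u (c x) = ∑ i, (w i - w' i) * c (u i) x := by
    simp only [quadErr, integral_zero_measure, zero_sub, ← Finset.sum_neg_distrib, hsymm x,
      Pi.sub_apply, ← neg_mul, neg_sub]
  have integrable_section (i : ι) : Integrable (fun x => (w i - w' i) * c (u i) x) P :=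
    (Integrable.of_bound hc.of_uncurry_left.aestronglyMeasurable A (ae_of_all _ (hA _))).const_mul _
  have cross_term_eq_zero : quadErr P w u (fun x => quadErr 0 (w' - w) u (c x)) = 0 := by
    simp only [nodal_part_eq]
    rw [quadErr_finsetSum w u _ fun i _ => integrable_section i]
    exact Finset.sum_eq_zero fun i _ => by rw [quadErr_const_mul, hw, mul_zero]
  have cross_term_eq_zero' : quadErr 0 (w' - w) u (fun x => quadErr P w u (c x)) = 0 := by
    rw [quadErr]
    simp only [hw, mul_zero, Finset.sum_const_zero, integral_zero_measure, sub_zero]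
  have integrable_nodal_part : Integrable (fun x => quadErr 0 (w' - w) u (c x)) P :=
    integrable_quadErr 0 (w' - w) u hc hA P
  rw [quadEnergy, quadErr_eq_add_quadErr_zero_measure P w u w']
  simp only [quadErr_eq_add_quadErr_zero_measure P w u w' (c _)]
  rw [quadErr_add w u (integrable_quadErr P w u hc hA P) integrable_nodal_part,
    quadErr_add (P := 0) _ _ integrable_zero_measure integrable_zero_measure, cross_term_eq_zero,
    cross_term_eq_zero', add_zero, zero_add]
  rfl

lemma quadEnergy_optimalWeights_le (P : Measure X) [IsFiniteMeasure P] {u : Fin m → X}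
    (hc : Measurable (Function.uncurry c)) {A : ℝ} (hA : ∀ x y, |c x y| ≤ A)
    (hsymm : ∀ x y, c x y = c y x) (hpos : ∀ v ≠ 0, 0 < quadEnergy 0 v u c) (w : Fin m → ℝ) :
    quadEnergy P (optimalWeights c P u) u c ≤ quadEnergy P w u c := by
  have det_ne_zero : (Matrix.of fun i j => c (u i) (u j)).det ≠ 0 := fun hdet => by
    obtain ⟨v, hv, hCv⟩ := Matrix.exists_mulVec_eq_zero_iff.2 hdet
    refine (hpos v hv).ne' ?_
    rw [quadEnergy_zero_measure]
    refine Finset.sum_eq_zero fun i _ => mul_eq_zero_of_right _ ?_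
    simpa only [Matrix.mulVec, dotProduct, Matrix.of_apply, mul_comm, Pi.zero_apply]
      using congr_fun hCv i
  rw [quadEnergy_eq_add_of_quadErr_eq_zero P w hc hA hsymm
    (quadErr_optimalWeights_eq_zero P det_ne_zero)]
  rcases eq_or_ne (w - optimalWeights c P u) 0 with hw | hw
  · simp [hw, quadEnergy_zero_measure]
  · exact le_add_of_nonneg_right (hpos _ hw).le

end OptimalWeights

section ReproducingKernel

variable {X H : Type*} [NormedAddCommGroup H] [InnerProductSpace ℝ H] [CompleteSpace H]
  [RKHS ℝ H X ℝ] {c : X → X → ℝ}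

lemma inner_kerFun_one (x : X) (g : H) : inner ℝ (RKHS.kerFun H x (1 : ℝ)) g = g x := by
  simp

lemma inner_kerFun_one_kerFun_one (hH : HasReproducingKernel H c) (x y : X) :
    inner ℝ (RKHS.kerFun H x (1 : ℝ)) (RKHS.kerFun H y (1 : ℝ)) = c x y := by
  rw [inner_kerFun_one, RKHS.kerFun_apply, hH]

lemma norm_kerFun_one_sq (hH : HasReproducingKernel H c) (x : X) :
    ‖RKHS.kerFun H x (1 : ℝ)‖ ^ 2 = c x x := by
  rw [← inner_kerFun_one_kerFun_one hH, real_inner_self_eq_norm_sq]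

lemma continuous_kerFun_one [TopologicalSpace X] (hH : HasReproducingKernel H c)
    (hc : Continuous (Function.uncurry c)) : Continuous fun x => RKHS.kerFun H x (1 : ℝ) := by
  rw [continuous_iff_continuousAt]
  intro x
  rw [ContinuousAt, tendsto_iff_norm_sub_tendsto_zero]
  have norm_sub_eq (y : X) : ‖RKHS.kerFun H y (1 : ℝ) - RKHS.kerFun H x (1 : ℝ)‖ =
      Real.sqrt (c y y - 2 * c y x + c x x) := by
    rw [← Real.sqrt_sq (norm_nonneg _), norm_sub_sq_real, norm_kerFun_one_sq hH,
      norm_kerFun_one_sq hH, inner_kerFun_one_kerFun_one hH]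
  have continuous_sqrt : Continuous fun y => Real.sqrt (c y y - 2 * c y x + c x x) := by
    have continuous_diag : Continuous fun y => c y y := hc.comp (continuous_id.prodMk continuous_id)
    have continuous_left : Continuous fun y => c y x :=
      hc.comp (continuous_id.prodMk continuous_const)
    exact ((continuous_diag.sub (continuous_left.const_mul 2)).add_const _).sqrt
  simp only [norm_sub_eq]
  convert continuous_sqrt.tendsto x using 2
  rw [show c x x - 2 * c x x + c x x = 0 by ring, Real.sqrt_zero]

variable [MeasurableSpace X]

lemma integrable_kerFun_one [TopologicalSpace X] [SecondCountableTopology X] [BorelSpace X]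
    (hH : HasReproducingKernel H c) (hc : Continuous (Function.uncurry c)) {A : ℝ}
    (hA : ∀ x, c x x ≤ A) (P : Measure X) [IsFiniteMeasure P] :
    Integrable (fun x => RKHS.kerFun H x (1 : ℝ)) P :=
  .of_bound (continuous_kerFun_one hH hc).aestronglyMeasurable (Real.sqrt A) <|
    ae_of_all _ fun x => Real.le_sqrt_of_sq_le <| (norm_kerFun_one_sq hH x).trans_le (hA x)

variable {ι : Type*} [Fintype ι] {P : Measure X}

lemma integrable_coe_of_integrable_kerFun_one
    (hP : Integrable (fun x => RKHS.kerFun H x (1 : ℝ)) P) (f : H) :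
    Integrable (fun x => f x) P := by
  simpa only [inner_kerFun_one] using hP.inner_const (𝕜 := ℝ) f

variable (H) in
/-- The Riesz representer, in `H`, of the quadrature error functional. -/
noncomputable def quadErrRepresenter (P : Measure X) (w : ι → ℝ) (u : ι → X) : H :=
  ∫ x, RKHS.kerFun H x (1 : ℝ) ∂P - ∑ i, w i • RKHS.kerFun H (u i) (1 : ℝ)

lemma inner_quadErrRepresenter (hP : Integrable (fun x => RKHS.kerFun H x (1 : ℝ)) P)
    (w : ι → ℝ) (u : ι → X) (f : H) : inner ℝ f (quadErrRepresenter H P w u) = quadErr P w u f := by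
  rw [quadErrRepresenter, inner_sub_right, ← integral_inner hP, inner_sum, quadErr]
  simp only [real_inner_comm _ f, real_inner_smul_left, inner_kerFun_one]

lemma norm_quadErrRepresenter_sq (hH : HasReproducingKernel H c)
    (hP : Integrable (fun x => RKHS.kerFun H x (1 : ℝ)) P) (w : ι → ℝ) (u : ι → X) :
    ‖quadErrRepresenter H P w u‖ ^ 2 = quadEnergy P w u c := by
  have representer_apply (x : X) : quadErrRepresenter H P w u x = quadErr P w u (c x) := by
    rw [← inner_kerFun_one, inner_quadErrRepresenter hP]
    congr 1 with y
    rw [← inner_kerFun_one, inner_kerFun_one_kerFun_one hH, ← inner_kerFun_one_kerFun_one hH,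
      real_inner_comm, inner_kerFun_one_kerFun_one hH]
  rw [← real_inner_self_eq_norm_sq, inner_quadErrRepresenter hP]
  simp only [quadEnergy, ← representer_apply]

lemma abs_quadErr_le_norm_mul_sqrt_quadEnergy (hH : HasReproducingKernel H c)
    (hP : Integrable (fun x => RKHS.kerFun H x (1 : ℝ)) P) (w : ι → ℝ) (u : ι → X) (f : H) :
    |quadErr P w u f| ≤ ‖f‖ * Real.sqrt (quadEnergy P w u c) := by
  rw [← inner_quadErrRepresenter hP, ← norm_quadErrRepresenter_sq hH hP,
    Real.sqrt_sq (norm_nonneg _)]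
  exact abs_real_inner_le_norm f _

end ReproducingKernel

section Gauss

variable {E : Type*} [NormedAddCommGroup E]

lemma abs_gaussKernel_le_one {σ : ℝ} (hσ : 0 < σ) (x y : E) : |gaussKernel σ x y| ≤ 1 := by
  rw [gaussKernel, Real.abs_exp, Real.exp_le_one_iff, neg_nonpos]
  positivity

lemma gaussKernel_comm (σ : ℝ) (x y : E) : gaussKernel σ x y = gaussKernel σ y x := by
  rw [gaussKernel, gaussKernel, norm_sub_rev]

lemma measurable_gaussKernel [MeasurableSpace E] [BorelSpace E] [SecondCountableTopology E] :
    Measurable fun p : (ℝ × E) × E => gaussKernel p.1.1 p.1.2 p.2 := by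
  unfold gaussKernel
  fun_prop

variable [InnerProductSpace ℝ E]

/-- The density of the spectral measure of the Gaussian kernel `gaussKernel σ`: the centred normal
density of variance `2 / σ` in each coordinate. -/
noncomputable def gaussSpectralDensity (σ : ℝ) (v : E) : ℝ :=
  (4 * Real.pi / σ) ^ (-((Module.finrank ℝ E : ℝ) / 2)) * Real.exp (-(σ / 4) * ‖v‖ ^ 2)

lemma gaussSpectralDensity_nonneg {σ : ℝ} (hσ : 0 < σ) (v : E) :
    0 ≤ gaussSpectralDensity σ v := by
  have := Real.pi_pos
  unfold gaussSpectralDensity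
  positivity

lemma gaussSpectralDensity_mul_le {σ q : ℝ} (hσ : 0 < σ) (hq : 1 ≤ q) (v : E) :
    gaussSpectralDensity (q * σ) v ≤
      q ^ ((Module.finrank ℝ E : ℝ) / 2) * gaussSpectralDensity σ v := by
  have q_pos : 0 < q := by linarith
  have constant_eq : (4 * Real.pi / (q * σ)) ^ (-((Module.finrank ℝ E : ℝ) / 2)) =
      q ^ ((Module.finrank ℝ E : ℝ) / 2) *
        (4 * Real.pi / σ) ^ (-((Module.finrank ℝ E : ℝ) / 2)) := by
    rw [mul_comm q, ← div_div, Real.div_rpow (by positivity) q_pos.le, Real.rpow_neg q_pos.le,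
      div_inv_eq_mul, mul_comm]
  have exp_le : Real.exp (-(q * σ / 4) * ‖v‖ ^ 2) ≤ Real.exp (-(σ / 4) * ‖v‖ ^ 2) := by
    gcongr
    exact le_mul_of_one_le_left hσ.le hq
  rw [gaussSpectralDensity, gaussSpectralDensity, constant_eq, mul_assoc]
  gcongr

open scoped RealInnerProductSpace

lemma abs_gaussSpectralDensity_mul_cos_le {σ : ℝ} (hσ : 0 < σ) (v x y : E) :
    |gaussSpectralDensity σ v * Real.cos ⟪x - y, v⟫| ≤ gaussSpectralDensity σ v := by
  rw [abs_mul, abs_of_nonneg (gaussSpectralDensity_nonneg hσ v)]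
  exact mul_le_of_le_one_right (gaussSpectralDensity_nonneg hσ v) (Real.abs_cos_le_one _)

variable [MeasurableSpace E] {ι : Type*} [Fintype ι] (P : Measure E) (w : ι → ℝ) (u : ι → E)

/-- The squared modulus, at the frequency `v`, of the Fourier transform of the quadrature error
functional. -/
noncomputable def charPower (v : E) : ℝ :=
  quadErr P w u (fun x => Real.cos ⟪x, v⟫) ^ 2 + quadErr P w u (fun x => Real.sin ⟪x, v⟫) ^ 2

lemma charPower_nonneg (v : E) : 0 ≤ charPower P w u v := by
  unfold charPower
  positivity

variable [FiniteDimensional ℝ E] [BorelSpace E]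

lemma integrable_exp_neg_mul_norm_sq {b : ℝ} (hb : 0 < b) :
    Integrable fun v : E => Real.exp (-b * ‖v‖ ^ 2) := by
  have integrable_cexp := (GaussianFourier.integrable_cexp_neg_mul_sq_norm_add (V := E)
    (b := (b : ℂ)) (by rwa [Complex.ofReal_re]) 0 0).norm
  refine integrable_cexp.congr (ae_of_all _ fun v => ?_)
  simp only [Complex.norm_exp, zero_mul, add_zero]
  norm_cast

lemma integrable_gaussSpectralDensity {σ : ℝ} (hσ : 0 < σ) :
    Integrable (gaussSpectralDensity σ : E → ℝ) := by
  unfold gaussSpectralDensity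
  exact (integrable_exp_neg_mul_norm_sq (by positivity)).const_mul _

lemma gaussKernel_eq_integral_cos {σ : ℝ} (hσ : 0 < σ) (x y : E) :
    gaussKernel σ x y = ∫ v : E, gaussSpectralDensity σ v * Real.cos ⟪x - y, v⟫ := by
  have b_re_pos : 0 < ((σ / 4 : ℝ) : ℂ).re := by rw [Complex.ofReal_re]; positivity
  have exponent_eq : Complex.I ^ 2 * (‖x - y‖ : ℂ) ^ 2 / (4 * ((σ / 4 : ℝ) : ℂ)) =
      ((-(‖x - y‖ ^ 2 / σ) : ℝ) : ℂ) := by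
    rw [Complex.I_sq]
    push_cast
    ring
  have constant_eq : ((Real.pi : ℂ) / ((σ / 4 : ℝ) : ℂ)) ^ ((Module.finrank ℝ E : ℂ) / 2) =
      (((4 * Real.pi / σ) ^ ((Module.finrank ℝ E : ℝ) / 2) : ℝ) : ℂ) := by
    rw [Complex.ofReal_cpow (by positivity)]
    push_cast
    congr 1
    field_simp
  have integral_cos : ∫ v : E, Real.exp (-(σ / 4) * ‖v‖ ^ 2) * Real.cos ⟪x - y, v⟫ =
      (4 * Real.pi / σ) ^ ((Module.finrank ℝ E : ℝ) / 2) * gaussKernel σ x y := by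
    have fourier := congr_arg Complex.re
      (GaussianFourier.integral_cexp_neg_mul_sq_norm_add (V := E) b_re_pos Complex.I (x - y))
    rw [exponent_eq, constant_eq, ← Complex.ofReal_exp, ← Complex.ofReal_mul, Complex.ofReal_re,
      ← RCLike.re_eq_complex_re, ← integral_re
        (GaussianFourier.integrable_cexp_neg_mul_sq_norm_add b_re_pos Complex.I (x - y))] at fourier
    rw [gaussKernel, ← fourier]
    refine integral_congr_ae (ae_of_all _ fun v => ?_)
    simp [Complex.exp_re, ← Complex.ofReal_pow]
  simp only [gaussSpectralDensity, mul_assoc]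
  rw [integral_const_mul, integral_cos, ← mul_assoc, ← Real.rpow_add (by positivity),
    neg_add_cancel, Real.rpow_zero, one_mul]

variable [IsFiniteMeasure P]

lemma quadEnergy_cos_inner_sub (v : E) :
    quadEnergy P w u (fun x y => Real.cos ⟪x - y, v⟫) = charPower P w u v := by
  simp only [inner_sub_left, Real.cos_sub]
  exact quadEnergy_mul_add_mul w u
    (.of_bound (by fun_prop) 1 (ae_of_all _ fun x => Real.abs_cos_le_one _))
    (.of_bound (by fun_prop) 1 (ae_of_all _ fun x => Real.abs_sin_le_one _))

lemma measurable_gaussSpectralDensity_mul_cos (σ : ℝ) :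
    Measurable fun p : (E × E) × E =>
      gaussSpectralDensity σ p.1.1 * Real.cos ⟪p.1.2 - p.2, p.1.1⟫ := by
  unfold gaussSpectralDensity
  fun_prop

lemma quadEnergy_gaussKernel {σ : ℝ} (hσ : 0 < σ) :
    quadEnergy P w u (gaussKernel σ) = ∫ v : E, gaussSpectralDensity σ v * charPower P w u v := by
  rw [funext₂ (gaussKernel_eq_integral_cos hσ), quadEnergy_integral_comm P w u
    (measurable_gaussSpectralDensity_mul_cos σ) (integrable_gaussSpectralDensity hσ)
    (ae_of_all _ (abs_gaussSpectralDensity_mul_cos_le hσ))]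
  simp only [quadEnergy_const_mul, quadEnergy_cos_inner_sub]

lemma integrable_gaussSpectralDensity_mul_charPower {σ : ℝ} (hσ : 0 < σ) :
    Integrable fun v : E => gaussSpectralDensity σ v * charPower P w u v := by
  simpa only [quadEnergy_const_mul, quadEnergy_cos_inner_sub] using
    integrable_quadEnergy (τ := (volume : Measure E)) P w u
      (measurable_gaussSpectralDensity_mul_cos σ) (integrable_gaussSpectralDensity hσ)
      (ae_of_all _ (abs_gaussSpectralDensity_mul_cos_le hσ))

lemma quadEnergy_gaussKernel_nonneg {σ : ℝ} (hσ : 0 < σ) :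
    0 ≤ quadEnergy P w u (gaussKernel σ) := by
  rw [quadEnergy_gaussKernel P w u hσ]
  exact integral_nonneg fun v =>
    mul_nonneg (gaussSpectralDensity_nonneg hσ v) (charPower_nonneg P w u v)

lemma quadEnergy_gaussKernel_mul_le {σ q : ℝ} (hσ : 0 < σ) (hq : 1 ≤ q) :
    quadEnergy P w u (gaussKernel (q * σ)) ≤
      q ^ ((Module.finrank ℝ E : ℝ) / 2) * quadEnergy P w u (gaussKernel σ) := by
  have qσ_pos : 0 < q * σ := by positivity
  rw [quadEnergy_gaussKernel P w u hσ, quadEnergy_gaussKernel P w u qσ_pos, ← integral_const_mul]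
  refine integral_mono (integrable_gaussSpectralDensity_mul_charPower P w u qσ_pos)
    ((integrable_gaussSpectralDensity_mul_charPower P w u hσ).const_mul _) fun v => ?_
  simp only [← mul_assoc]
  exact mul_le_mul_of_nonneg_right (gaussSpectralDensity_mul_le hσ hq v) (charPower_nonneg P w u v)

end Gauss

section GammaMeasure

open ProbabilityTheory

lemma gammaMeasure_le_smul {ν a b : ℝ} (hν : 0 < ν) (hb : 0 < b) (hab : b ≤ a) :
    gammaMeasure ν a ≤ ENNReal.ofReal ((a / b) ^ ν) • gammaMeasure ν b := by
  have a_pos : 0 < a := hb.trans_le hab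
  have := Real.Gamma_pos_of_pos hν
  rw [gammaMeasure, gammaMeasure,
    ← withDensity_smul (f := gammaPDF ν b) _ (measurable_gammaPDFReal ν b).ennreal_ofReal]
  refine withDensity_mono (ae_of_all _ fun σ => ?_)
  rw [Pi.smul_apply, smul_eq_mul, gammaPDF, gammaPDF, ← ENNReal.ofReal_mul (by positivity)]
  refine ENNReal.ofReal_le_ofReal ?_
  rw [gammaPDFReal, gammaPDFReal]
  split_ifs with hσ
  · have exp_le : Real.exp (-(a * σ)) ≤ Real.exp (-(b * σ)) := by gcongr
    calc a ^ ν / Real.Gamma ν * σ ^ (ν - 1) * Real.exp (-(a * σ))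
      _ ≤ a ^ ν / Real.Gamma ν * σ ^ (ν - 1) * Real.exp (-(b * σ)) := by gcongr
      _ = (a / b) ^ ν * (b ^ ν / Real.Gamma ν * σ ^ (ν - 1) * Real.exp (-(b * σ))) := by
        rw [Real.div_rpow a_pos.le hb.le]
        field_simp
  · rw [mul_zero]

lemma integral_comp_mul_left_gammaMeasure {ν a q : ℝ} (hν : 0 < ν) (ha : 0 < a) (hq : 0 < q)
    (f : ℝ → ℝ) :
    ∫ σ, f (q * σ) ∂(gammaMeasure ν (q * a)) = ∫ σ, f σ ∂(gammaMeasure ν a) := by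
  have change_of_variables := integral_comp_mul_left_Ioi
    (fun σ => a ^ ν / Real.Gamma ν * σ ^ (ν - 1) * Real.exp (-(a * σ)) * f σ) 0 hq
  rw [mul_zero, smul_eq_mul, eq_inv_mul_iff_mul_eq₀ hq.ne', ← integral_const_mul]
    at change_of_variables
  rw [integral_gammaMeasure hν (mul_pos hq ha), integral_gammaMeasure hν ha, ← change_of_variables]
  refine setIntegral_congr_fun measurableSet_Ioi fun σ (hσ : 0 < σ) => ?_
  simp only [Real.mul_rpow hq.le ha.le, Real.mul_rpow hq.le hσ.le, Real.rpow_sub_one hq.ne']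
  field_simp

lemma gammaMeasure_Ioo_pos {ν a δ : ℝ} (hν : 0 < ν) (ha : 0 < a) (hδ : 0 < δ) :
    0 < gammaMeasure ν a (Set.Ioo 0 δ) := by
  have Ioo_subset_support : Set.Ioo 0 δ ⊆ Function.support (gammaPDF ν a) ∩ Set.Ioo 0 δ :=
    fun σ hσ => ⟨(ENNReal.ofReal_pos.2 (gammaPDFReal_pos hν ha hσ.1)).ne', hσ⟩
  rw [gammaMeasure, withDensity_apply _ measurableSet_Ioo,
    setLIntegral_pos_iff (f := gammaPDF ν a) (measurable_gammaPDFReal ν a).ennreal_ofReal]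
  refine lt_of_lt_of_le ?_ (measure_mono Ioo_subset_support)
  rwa [Real.volume_Ioo, sub_zero, ENNReal.ofReal_pos]

end GammaMeasure

section GammaMixtureEnergy

open ProbabilityTheory

variable {E : Type*} [NormedAddCommGroup E] {ν a b : ℝ}

lemma abs_gammaMixKernel_le_one (hν : 0 < ν) (ha : 0 < a) (x y : E) :
    |gammaMixKernel ν a x y| ≤ 1 := by
  have := isProbabilityMeasure_gammaMeasure hν ha
  have norm_le_one : ∀ᵐ σ ∂gammaMeasure ν a, ‖gaussKernel σ x y‖ ≤ 1 := by
    filter_upwards [ae_pos_gammaMeasure ν a] with σ hσ using abs_gaussKernel_le_one hσ x y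
  simpa [gammaMixKernel] using norm_integral_le_of_norm_le_const norm_le_one

lemma gammaMixKernel_comm (ν a : ℝ) (x y : E) :
    gammaMixKernel ν a x y = gammaMixKernel ν a y x := by
  simp only [gammaMixKernel, gaussKernel_comm _ x y]

lemma continuous_gammaMixKernel (hν : 0 < ν) (ha : 0 < a) :
    Continuous fun p : E × E => gammaMixKernel ν a p.1 p.2 := by
  have := isProbabilityMeasure_gammaMeasure hν ha
  refine continuous_of_dominated (bound := fun _ => 1) (fun p => ?_) (fun p => ?_)
    (integrable_const 1) (ae_of_all _ fun σ => ?_)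
  · unfold gaussKernel
    exact Measurable.aestronglyMeasurable (by fun_prop)
  · filter_upwards [ae_pos_gammaMeasure ν a] with σ hσ using abs_gaussKernel_le_one hσ _ _
  · unfold gaussKernel
    fun_prop

variable [MeasurableSpace E] {ι : Type*} [Fintype ι] (P : Measure E) (w : ι → ℝ) (u : ι → E)

lemma tendsto_quadEnergy_zero_gaussKernel {u : ι → E} (hu : Function.Injective u) :
    Tendsto (fun σ => quadEnergy 0 w u (gaussKernel σ)) (nhdsWithin 0 (Set.Ioi 0))
      (nhds (∑ i, w i ^ 2)) := by
  classical
  have tendsto_gaussKernel (i j : ι) : Tendsto (fun σ => gaussKernel σ (u i) (u j))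
      (nhdsWithin 0 (Set.Ioi 0)) (nhds (if i = j then 1 else 0)) := by
    rcases eq_or_ne i j with rfl | hij
    · simp [gaussKernel]
    · rw [if_neg hij]
      have dist_pos : 0 < ‖u i - u j‖ ^ 2 := pow_pos (norm_pos_iff.2 (sub_ne_zero.2 (hu.ne hij))) 2
      exact Real.tendsto_exp_neg_atTop_nhds_zero.comp
        (tendsto_inv_nhdsGT_zero.const_mul_atTop dist_pos)
  have sum_sq_eq : ∑ i, w i ^ 2 = ∑ i, w i * ∑ j, w j * if i = j then 1 else 0 := by
    simp [sq]
  simp only [quadEnergy_zero_measure, sum_sq_eq]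
  exact tendsto_finsetSum _ fun i _ => Tendsto.const_mul _ <|
    tendsto_finsetSum _ fun j _ => (tendsto_gaussKernel i j).const_mul _

variable [BorelSpace E] [SecondCountableTopology E] [IsFiniteMeasure P]

lemma quadEnergy_gammaMixKernel (hν : 0 < ν) (ha : 0 < a) :
    quadEnergy P w u (gammaMixKernel ν a) =
      ∫ σ, quadEnergy P w u (gaussKernel σ) ∂(gammaMeasure ν a) := by
  have := isProbabilityMeasure_gammaMeasure hν ha
  refine quadEnergy_integral_comm P w u measurable_gaussKernel (integrable_const 1) ?_
  filter_upwards [ae_pos_gammaMeasure ν a] with σ hσ using abs_gaussKernel_le_one hσ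

lemma integrable_quadEnergy_gaussKernel (hν : 0 < ν) (ha : 0 < a) :
    Integrable (fun σ => quadEnergy P w u (gaussKernel σ)) (gammaMeasure ν a) := by
  have := isProbabilityMeasure_gammaMeasure hν ha
  refine integrable_quadEnergy P w u measurable_gaussKernel (integrable_const 1) ?_
  filter_upwards [ae_pos_gammaMeasure ν a] with σ hσ using abs_gaussKernel_le_one hσ

lemma integrable_quadEnergy_gaussKernel_comp_mul (hν : 0 < ν) (ha : 0 < a) {q : ℝ} (hq : 0 < q) :
    Integrable (fun σ => quadEnergy P w u (gaussKernel (q * σ))) (gammaMeasure ν a) := by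
  have := isProbabilityMeasure_gammaMeasure hν ha
  refine integrable_quadEnergy P w u (measurable_gaussKernel.comp
    (((measurable_const_mul q).prodMap measurable_id).prodMap measurable_id))
    (integrable_const 1) ?_
  filter_upwards [ae_pos_gammaMeasure ν a] with σ hσ using abs_gaussKernel_le_one (mul_pos hq hσ)

end GammaMixtureEnergy

section GammaMixtureComparison

open ProbabilityTheory

variable {E : Type*} [NormedAddCommGroup E] [InnerProductSpace ℝ E] [FiniteDimensional ℝ E]
  [MeasurableSpace E] [BorelSpace E] {ι : Type*} [Fintype ι] (P : Measure E) [IsFiniteMeasure P]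
  (w : ι → ℝ) (u : ι → E) {ν a b : ℝ}

lemma ae_quadEnergy_gaussKernel_nonneg (ν a : ℝ) :
    ∀ᵐ σ ∂(gammaMeasure ν a), 0 ≤ quadEnergy P w u (gaussKernel σ) := by
  filter_upwards [ae_pos_gammaMeasure ν a] with σ hσ using quadEnergy_gaussKernel_nonneg P w u hσ

lemma quadEnergy_gammaMixKernel_nonneg (hν : 0 < ν) (ha : 0 < a) :
    0 ≤ quadEnergy P w u (gammaMixKernel ν a) := by
  rw [quadEnergy_gammaMixKernel P w u hν ha]
  exact integral_nonneg_of_ae (ae_quadEnergy_gaussKernel_nonneg P w u ν a)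

lemma quadEnergy_gammaMixKernel_le_of_ge (hν : 0 < ν) (hb : 0 < b) (hab : b ≤ a) :
    quadEnergy P w u (gammaMixKernel ν a) ≤
      (a / b) ^ ν * quadEnergy P w u (gammaMixKernel ν b) := by
  have a_pos : 0 < a := hb.trans_le hab
  rw [quadEnergy_gammaMixKernel P w u hν a_pos, quadEnergy_gammaMixKernel P w u hν hb]
  refine (integral_mono_measure (gammaMeasure_le_smul hν hb hab)
    (Measure.ae_smul_measure (ae_quadEnergy_gaussKernel_nonneg P w u ν b) _)
    ((integrable_quadEnergy_gaussKernel P w u hν hb).smul_measure ENNReal.ofReal_ne_top)).trans ?_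
  rw [integral_smul_measure, ENNReal.toReal_ofReal (by positivity), smul_eq_mul]

lemma quadEnergy_gammaMixKernel_le_of_le (hν : 0 < ν) (ha : 0 < a) (hab : a ≤ b) :
    quadEnergy P w u (gammaMixKernel ν a) ≤
      (b / a) ^ ((Module.finrank ℝ E : ℝ) / 2) * quadEnergy P w u (gammaMixKernel ν b) := by
  have b_pos : 0 < b := ha.trans_le hab
  have ratio_mul : b / a * a = b := div_mul_cancel₀ b ha.ne'
  rw [quadEnergy_gammaMixKernel P w u hν ha, quadEnergy_gammaMixKernel P w u hν b_pos,
    ← integral_comp_mul_left_gammaMeasure hν ha (div_pos b_pos ha), ratio_mul,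
    ← integral_const_mul]
  refine integral_mono_ae
    (integrable_quadEnergy_gaussKernel_comp_mul P w u hν b_pos (div_pos b_pos ha))
    ((integrable_quadEnergy_gaussKernel P w u hν b_pos).const_mul _) ?_
  filter_upwards [ae_pos_gammaMeasure ν b] with σ hσ
  exact quadEnergy_gaussKernel_mul_le P w u hσ ((one_le_div ha).2 hab)

lemma quadEnergy_gammaMixKernel_le (hν : 0 < ν) (ha : 0 < a) (hb : 0 < b) :
    quadEnergy P w u (gammaMixKernel ν a) ≤ ((a / b) ^ ν +
      (b / a) ^ ((Module.finrank ℝ E : ℝ) / 2)) * quadEnergy P w u (gammaMixKernel ν b) := by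
  have energy_nonneg := quadEnergy_gammaMixKernel_nonneg P w u hν hb
  rcases le_total a b with hab | hab
  · refine (quadEnergy_gammaMixKernel_le_of_le P w u hν ha hab).trans ?_
    exact mul_le_mul_of_nonneg_right (le_add_of_nonneg_left (by positivity)) energy_nonneg
  · refine (quadEnergy_gammaMixKernel_le_of_ge P w u hν hb hab).trans ?_
    exact mul_le_mul_of_nonneg_right (le_add_of_nonneg_right (by positivity)) energy_nonneg

lemma quadEnergy_zero_gammaMixKernel_pos {w : ι → ℝ} {u : ι → E} (hν : 0 < ν) (ha : 0 < a)
    (hu : Function.Injective u) (hw : w ≠ 0) :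
    0 < quadEnergy 0 w u (gammaMixKernel ν a) := by
  have limit_pos : 0 < ∑ i, w i ^ 2 := by
    obtain ⟨i, hi⟩ := Function.ne_iff.1 hw
    exact Finset.sum_pos' (fun j _ => sq_nonneg _) ⟨i, Finset.mem_univ _, sq_pos_of_ne_zero hi⟩
  obtain ⟨δ, δ_pos, energy_pos⟩ := mem_nhdsGT_iff_exists_Ioo_subset.1
    ((tendsto_quadEnergy_zero_gaussKernel w hu).eventually (lt_mem_nhds limit_pos))
  rw [quadEnergy_gammaMixKernel 0 w u hν ha, integral_pos_iff_support_of_nonneg_ae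
    (ae_quadEnergy_gaussKernel_nonneg 0 w u ν a) (integrable_quadEnergy_gaussKernel 0 w u hν ha)]
  exact (gammaMeasure_Ioo_pos hν ha δ_pos).trans_le
    (measure_mono fun σ hσ => (energy_pos hσ).ne')

end GammaMixtureComparison

section MonomialMatrix

lemma eq_zero_of_sum_mul_prod_grid_pow_eq_zero {s n : ℕ} {c : (Fin s → Fin (n + 1)) → ℝ}
    (hc : ∀ α : Fin s → Fin (n + 1), ∑ β, c β * ∏ i, ((α i : ℕ) : ℝ) ^ (β i : ℕ) = 0) :
    c = 0 := by
  let exponent (β : Fin s → Fin (n + 1)) : Fin s →₀ ℕ :=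
    Finsupp.equivFunOnFinite.symm fun i => (β i : ℕ)
  have exponent_injective : Function.Injective exponent := fun β β' h => by
    funext i
    simpa [exponent, Fin.ext_iff] using DFunLike.congr_fun h i
  let p : MvPolynomial (Fin s) ℝ := ∑ β, MvPolynomial.monomial (exponent β) (c β)
  have coeff_p (β) : p.coeff (exponent β) = c β := by
    simp [p, MvPolynomial.coeff_sum, MvPolynomial.coeff_monomial, exponent_injective.eq_iff]
  have degreeOf_p_le (i : Fin s) : p.degreeOf i ≤ n := by
    refine (MvPolynomial.degreeOf_sum_le _ _ _).trans (Finset.sup_le fun β _ => ?_)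
    refine MvPolynomial.degreeOf_le_iff.2 fun d hd => ?_
    rw [Finset.mem_singleton.1 (MvPolynomial.support_monomial_subset hd)]
    simpa [exponent] using Nat.lt_succ_iff.1 (β i).2
  have eval_p (α : Fin s → Fin (n + 1)) :
      MvPolynomial.eval (fun i => ((α i : ℕ) : ℝ)) p = 0 := by
    rw [← hc α, map_sum]
    refine Finset.sum_congr rfl fun β _ => ?_
    rw [MvPolynomial.eval_monomial, Finsupp.prod_fintype _ _ (by simp)]
    simp [exponent]
  have p_eq_zero : p = 0 := by
    refine MvPolynomial.eq_zero_of_eval_zero_at_prod_finset p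
      (fun _ => Finset.univ.image fun k : Fin (n + 1) => ((k : ℕ) : ℝ)) (fun i => ?_) fun x hx => ?_
    · rw [Finset.card_image_of_injective _ fun j k h => Fin.ext (Nat.cast_injective h),
        Finset.card_univ, Fintype.card_fin, Nat.lt_succ_iff]
      exact degreeOf_p_le i
    · simp only [Finset.mem_image, Finset.mem_univ, true_and] at hx
      choose α hα using hx
      rw [← funext hα, eval_p]
  funext β
  rw [← coeff_p β, p_eq_zero, MvPolynomial.coeff_zero, Pi.zero_apply]

/-- The matrix of the values of the monomials of partial degrees at most `n` at the points `ξ α`. -/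
def monomialMatrix {s n : ℕ} (ξ : (Fin s → Fin (n + 1)) → Fin s → ℝ) :
    Matrix (Fin s → Fin (n + 1)) (Fin s → Fin (n + 1)) ℝ :=
  Matrix.of fun β α => ∏ i, ξ α i ^ (β i : ℕ)

lemma continuous_monomialMatrix {s n : ℕ} : Continuous (monomialMatrix (s := s) (n := n)) := by
  unfold monomialMatrix
  fun_prop

lemma det_monomialMatrix_grid_ne_zero (s n : ℕ) :
    (monomialMatrix fun (α : Fin s → Fin (n + 1)) i => ((α i : ℕ) : ℝ)).det ≠ 0 := fun hdet => by
  obtain ⟨c, c_ne_zero, hc⟩ := Matrix.exists_vecMul_eq_zero_iff.2 hdet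
  exact c_ne_zero (eq_zero_of_sum_mul_prod_grid_pow_eq_zero (congr_fun hc))

lemma sum_abs_mulVec_le {ι κ : Type*} [Fintype ι] [Fintype κ] (M : Matrix ι κ ℝ) {v : κ → ℝ}
    {B : ℝ} (hv : ∀ k, |v k| ≤ B) : ∑ i, |M.mulVec v i| ≤ (∑ i, ∑ k, |M i k|) * B := by
  simp only [Finset.sum_mul]
  refine Finset.sum_le_sum fun i _ => (Finset.abs_sum_le_sum_abs _ _).trans ?_
  refine Finset.sum_le_sum fun k _ => ?_
  rw [abs_mul]
  exact mul_le_mul_of_nonneg_left (hv k) (abs_nonneg _)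

lemma exists_pos_forall_near_grid_monomialMatrix (s n : ℕ) : ∃ δ > 0, ∃ A > 0,
    ∀ ξ : (Fin s → Fin (n + 1)) → Fin s → ℝ, (∀ α i, |ξ α i - (α i : ℕ)| ≤ δ) →
      (monomialMatrix ξ).det ≠ 0 ∧ ∑ β, ∑ α, |(monomialMatrix ξ)⁻¹ β α| ≤ A := by
  let grid : (Fin s → Fin (n + 1)) → Fin s → ℝ := fun α i => ((α i : ℕ) : ℝ)
  have det_grid : (monomialMatrix grid).det ≠ 0 := det_monomialMatrix_grid_ne_zero s n
  have continuousAt_inv : ContinuousAt (fun ξ => (monomialMatrix ξ)⁻¹) grid := by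
    refine ContinuousAt.comp' (continuousAt_matrix_inv _ ?_) continuous_monomialMatrix.continuousAt
    rw [Ring.inverse_eq_inv']
    exact continuousAt_inv₀ det_grid
  have continuousAt_sum :
      ContinuousAt (fun ξ => ∑ β, ∑ α, |(monomialMatrix ξ)⁻¹ β α|) grid := by
    have continuousAt_entry (β α : Fin s → Fin (n + 1)) :
        ContinuousAt (fun ξ => |(monomialMatrix ξ)⁻¹ β α|) grid :=
      (continuousAt_pi.1 (continuousAt_pi.1 continuousAt_inv β) α).abs
    fun_prop
  have eventually_near_grid := (continuous_monomialMatrix.matrix_det.continuousAt.eventually_ne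
    det_grid).and (continuousAt_sum.eventually (gt_mem_nhds (lt_add_one _)))
  obtain ⟨δ, δ_pos, hδ⟩ := Metric.eventually_nhds_iff.1 eventually_near_grid
  refine ⟨δ / 2, by positivity, ∑ β, ∑ α, |(monomialMatrix grid)⁻¹ β α| + 1, by positivity,
    fun ξ hξ => ?_⟩
  have dist_lt : dist ξ grid < δ :=
    ((dist_pi_le_iff (by positivity)).2 fun α => (dist_pi_le_iff (by positivity)).2 (hξ α)).trans_lt
      (half_lt_self δ_pos)
  exact ⟨(hδ dist_lt).1, (hδ dist_lt).2.le⟩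

end MonomialMatrix

section PolynomialExactness

variable {X ι : Type*} [MeasurableSpace X] [Fintype ι] {s n : ℕ}

lemma quadErr_eval_eq_zero {P : Measure X} {w : ι → ℝ} {u : ι → X} {ζ : X → Fin s → ℝ}
    (hint : ∀ β : Fin s → Fin (n + 1), Integrable (fun x => ∏ i, ζ x i ^ (β i : ℕ)) P)
    (hzero : ∀ β : Fin s → Fin (n + 1), quadErr P w u (fun x => ∏ i, ζ x i ^ (β i : ℕ)) = 0)
    {q : MvPolynomial (Fin s) ℝ} (hq : q.totalDegree ≤ n) :
    quadErr P w u (fun x => MvPolynomial.eval (ζ x) q) = 0 := by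
  have exponent_lt {d : Fin s →₀ ℕ} (hd : d ∈ q.support) (i : Fin s) : d i < n + 1 :=
    Nat.lt_succ_iff.2 ((Finsupp.le_degree i d).trans ((MvPolynomial.le_totalDegree hd).trans hq))
  simp only [MvPolynomial.eval_eq']
  rw [quadErr_finsetSum w u _ fun d hd =>
    (hint fun i => ⟨d i, exponent_lt hd i⟩).const_mul (MvPolynomial.coeff d q)]
  refine Finset.sum_eq_zero fun d hd => ?_
  rw [quadErr_const_mul]
  exact mul_eq_zero_of_right _ (hzero fun i => ⟨d i, exponent_lt hd i⟩)

variable (X) in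
lemma exists_weights_quadErr_eval_eq_zero (s n : ℕ) : ∃ δ > 0, ∃ A > 0,
    ∀ {ζ : X → Fin s → ℝ} {v : (Fin s → Fin (n + 1)) → X} {Q : Measure X} [IsFiniteMeasure Q]
      {b : ℝ}, Measurable ζ →
      (∀ α i, |ζ (v α) i - (α i : ℕ)| ≤ δ) → 1 ≤ b → (∀ᵐ x ∂Q, ∀ i, |ζ x i| ≤ b) →
      ∃ w : (Fin s → Fin (n + 1)) → ℝ, ∑ α, |w α| ≤ A * ((b ^ n) ^ s * Q.real Set.univ) ∧
        ∀ q : MvPolynomial (Fin s) ℝ, q.totalDegree ≤ n →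
          quadErr Q w v (fun x => MvPolynomial.eval (ζ x) q) = 0 := by
  obtain ⟨δ, δ_pos, A, A_pos, near_grid⟩ := exists_pos_forall_near_grid_monomialMatrix s n
  refine ⟨δ, δ_pos, A, A_pos, fun {ζ v Q} _ {b} hζ hv hb hQ => ?_⟩
  obtain ⟨det_ne_zero, sum_inv_le⟩ := near_grid (fun α => ζ (v α)) hv
  have monomial_le (β : Fin s → Fin (n + 1)) :
      ∀ᵐ x ∂Q, ‖∏ i, ζ x i ^ (β i : ℕ)‖ ≤ (b ^ n) ^ s := by
    filter_upwards [hQ] with x hx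
    calc ‖∏ i, ζ x i ^ (β i : ℕ)‖ = ∏ i, |ζ x i| ^ (β i : ℕ) := by simp
      _ ≤ ∏ _i : Fin s, b ^ n := by
        refine Finset.prod_le_prod (fun i _ => by positivity) fun i _ => ?_
        exact (pow_le_pow_left₀ (abs_nonneg _) (hx i) _).trans
          (pow_le_pow_right₀ hb (Nat.lt_succ_iff.1 (β i).2))
      _ = (b ^ n) ^ s := by simp
  let moments (β : Fin s → Fin (n + 1)) : ℝ := ∫ x, ∏ i, ζ x i ^ (β i : ℕ) ∂Q
  have moments_le (β) : |moments β| ≤ (b ^ n) ^ s * Q.real Set.univ :=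
    norm_integral_le_of_norm_le_const (monomial_le β)
  let M := monomialMatrix fun α => ζ (v α)
  refine ⟨M⁻¹.mulVec moments, (sum_abs_mulVec_le M⁻¹ moments_le).trans ?_, fun q hq =>
    quadErr_eval_eq_zero (fun β => .of_bound (by fun_prop) _ (monomial_le β)) (fun β => ?_) hq⟩
  · exact mul_le_mul_of_nonneg_right sum_inv_le ((abs_nonneg _).trans (moments_le 0))
  · have mulVec_eq : M.mulVec (M⁻¹.mulVec moments) = moments := by
      rw [Matrix.mulVec_mulVec, Matrix.mul_nonsing_inv _ (isUnit_iff_ne_zero.2 det_ne_zero),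
        Matrix.one_mulVec]
    rw [quadErr, sub_eq_zero]
    exact (congr_fun mulVec_eq β).symm.trans (Finset.sum_congr rfl fun α _ => mul_comm _ _)

end PolynomialExactness

section LocalRule

variable {s : ℕ}

lemma quadErr_fiberSum {X ι κ : Type*} [MeasurableSpace X] [Fintype ι] [DecidableEq ι] [Fintype κ]
    (P : Measure X) (w : κ → ℝ) (u : ι → X) (τ : κ → ι) (g : X → ℝ) :
    quadErr P (fun i => ∑ k with τ k = i, w k) u g = quadErr P w (u ∘ τ) g := by
  simp only [quadErr]
  rw [← Finset.sum_fiberwise Finset.univ τ]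
  congr 1
  refine Finset.sum_congr rfl fun i _ => ?_
  rw [Finset.sum_mul]
  refine Finset.sum_congr rfl fun k hk => ?_
  rw [Function.comp_apply, (Finset.mem_filter.1 hk).2]

lemma sum_abs_fiberSum_le {ι κ : Type*} [Fintype ι] [DecidableEq ι] [Fintype κ] (w : κ → ℝ)
    (τ : κ → ι) : ∑ i, |∑ k with τ k = i, w k| ≤ ∑ k, |w k| :=
  calc ∑ i, |∑ k with τ k = i, w k| ≤ ∑ i, ∑ k with τ k = i, |w k| :=
        Finset.sum_le_sum fun _ _ => Finset.abs_sum_le_sum_abs _ _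
    _ = ∑ k, |w k| := Finset.sum_fiberwise _ _ _

open MvPolynomial in
lemma totalDegree_sq_dist_pow_le (a b ρ : ℝ) (z : Fin s → ℝ) (k : ℕ) :
    ((C a + C b * ∑ i, (C (z i) + C ρ * X i) ^ 2 : MvPolynomial (Fin s) ℝ) ^ k).totalDegree
      ≤ 2 * k := by
  have affine_le (i : Fin s) : (C (z i) + C ρ * X i : MvPolynomial (Fin s) ℝ).totalDegree ≤ 1 :=
    (totalDegree_add _ _).trans (max_le (by simp) ((totalDegree_mul _ _).trans (by simp)))
  have sq_le (i : Fin s) :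
      ((C (z i) + C ρ * X i) ^ 2 : MvPolynomial (Fin s) ℝ).totalDegree ≤ 2 :=
    (totalDegree_pow _ _).trans (by linarith [affine_le i])
  have base_le : (C a + C b * ∑ i, (C (z i) + C ρ * X i) ^ 2 :
      MvPolynomial (Fin s) ℝ).totalDegree ≤ 2 := by
    refine (totalDegree_add _ _).trans (max_le (by simp) ((totalDegree_mul _ _).trans ?_))
    rw [totalDegree_C, zero_add]
    exact (totalDegree_finsetSum _ _).trans (Finset.sup_le fun i _ => sq_le i)
  exact (totalDegree_pow _ _).trans (by linarith [Nat.mul_le_mul_left k base_le])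

open MvPolynomial in
lemma exists_eval_eq_sq_dist_pow {ρ : ℝ} (hρ : ρ ≠ 0) (y z : EuclideanSpace ℝ (Fin s)) (a b : ℝ)
    (k : ℕ) : ∃ q : MvPolynomial (Fin s) ℝ, q.totalDegree ≤ 2 * k ∧
      ∀ x : EuclideanSpace ℝ (Fin s),
        eval (fun i => (x i - z i) / ρ) q = (a + b * ‖x - y‖ ^ 2) ^ k := by
  refine ⟨_, totalDegree_sq_dist_pow_le a b ρ (fun i => z i - y i) k, fun x => ?_⟩
  simp only [map_pow, map_add, map_mul, map_sum, eval_C, eval_X, EuclideanSpace.norm_sq_eq,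
    Real.norm_eq_abs, sq_abs, PiLp.sub_apply, mul_div_cancel₀ _ hρ,
    sub_add_sub_cancel']

/-- The point of the grid `{0, …, n}ˢ` with the given coordinates, as a vector of `ℝˢ`. -/
noncomputable def gridPoint {n : ℕ} (α : Fin s → Fin (n + 1)) : EuclideanSpace ℝ (Fin s) :=
  WithLp.toLp 2 fun i => ((α i : ℕ) : ℝ)

lemma exists_weights_quadErr_sq_dist_pow_eq_zero (s n : ℕ) : ∃ δ > 0, ∃ A > 0,
    ∀ {z : EuclideanSpace ℝ (Fin s)} {ρ : ℝ}
      {v : (Fin s → Fin (n + 1)) → EuclideanSpace ℝ (Fin s)}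
      {Q : Measure (EuclideanSpace ℝ (Fin s))} [IsFiniteMeasure Q] {b : ℝ}, 0 < ρ →
      (∀ α, ‖z + ρ • gridPoint α - v α‖ ≤ δ * ρ) → 1 ≤ b → (∀ᵐ x ∂Q, ‖x - z‖ ≤ b * ρ) →
      ∃ w : (Fin s → Fin (n + 1)) → ℝ, ∑ α, |w α| ≤ A * ((b ^ n) ^ s * Q.real Set.univ) ∧
        ∀ (y : EuclideanSpace ℝ (Fin s)) (a c : ℝ) (k : ℕ), 2 * k ≤ n →
          quadErr Q w v (fun x => (a + c * ‖x - y‖ ^ 2) ^ k) = 0 := by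
  obtain ⟨δ, δ_pos, A, A_pos, exists_weights⟩ :=
    exists_weights_quadErr_eval_eq_zero (EuclideanSpace ℝ (Fin s)) s n
  refine ⟨δ, δ_pos, A, A_pos, fun {z ρ v Q} _ {b} hρ hv hb hQ => ?_⟩
  have abs_coord_le {x : EuclideanSpace ℝ (Fin s)} {B : ℝ} (hx : ‖x‖ ≤ B * ρ) (i : Fin s) :
      |x i / ρ| ≤ B := by
    rw [abs_div, abs_of_pos hρ, div_le_iff₀ hρ]
    exact (PiLp.norm_apply_le x i).trans hx
  have near_grid (α i) : |(v α i - z i) / ρ - (α i : ℕ)| ≤ δ := by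
    convert abs_coord_le (hv α) i using 1
    rw [← abs_neg]
    simp only [gridPoint, PiLp.sub_apply, PiLp.add_apply, PiLp.smul_apply, smul_eq_mul]
    congr 1
    field
  obtain ⟨w, sum_abs_le, exact_eval⟩ := exists_weights (ζ := fun x i => (x i - z i) / ρ)
    (by fun_prop) near_grid hb (hQ.mono fun x hx i => abs_coord_le hx i)
  refine ⟨w, sum_abs_le, fun y a c k hk => ?_⟩
  obtain ⟨q, totalDegree_le, eval_q⟩ := exists_eval_eq_sq_dist_pow hρ.ne' y z a c k
  simpa only [eval_q] using exact_eval q (totalDegree_le.trans hk)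

/-- The interior corkscrew (or plumpness) condition: at every scale `t ≤ t₀`, each point of `U`
has within distance `t` the centre of a ball in `U` of radius proportional to `t`. -/
def HasInteriorCorkscrew {E : Type*} [PseudoMetricSpace E] (U : Set E) : Prop :=
  ∃ κ > 0, ∃ t₀ > 0, ∀ x ∈ U, ∀ t : ℝ, 0 < t → t ≤ t₀ →
    ∃ y ∈ Metric.closedBall x t, Metric.closedBall y (κ * t) ⊆ U

lemma hasInteriorCorkscrew_of_convex {E : Type*} [NormedAddCommGroup E] [NormedSpace ℝ E]
    {U : Set E} (hconv : Convex ℝ U) (hbdd : Bornology.IsBounded U)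
    (hint : (interior U).Nonempty) : HasInteriorCorkscrew U := by
  obtain ⟨x₀, hx₀⟩ := hint
  obtain ⟨r, r_pos, ball_subset⟩ :=
    Metric.nhds_basis_closedBall.mem_iff.1 (mem_interior_iff_mem_nhds.1 hx₀)
  obtain ⟨d, d_pos, hd⟩ := hbdd.subset_closedBall_lt 0 x₀
  refine ⟨r / d, by positivity, d, d_pos, fun x hx t t_pos ht => ?_⟩
  obtain ⟨θ, θ_pos, rfl⟩ : ∃ θ > 0, t = d * θ := ⟨t / d, by positivity, by field⟩
  refine ⟨x + θ • (x₀ - x), ?_, fun y hy => ?_⟩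
  · rw [mem_closedBall_iff_norm, add_sub_cancel_left, norm_smul, Real.norm_of_nonneg θ_pos.le,
      mul_comm d, norm_sub_rev]
    exact mul_le_mul_of_nonneg_left (mem_closedBall_iff_norm.1 (hd hx)) θ_pos.le
  -- The homothety of centre `x` and ratio `θ` maps the ball around `x₀` onto this ball.
  · let y' := x + θ⁻¹ • (y - x)
    have y_sub_eq : y - (x + θ • (x₀ - x)) = θ • (y' - x₀) := by
      simp only [y', smul_add, smul_sub, smul_inv_smul₀ θ_pos.ne']
      abel
    have y'_mem : y' ∈ Metric.closedBall x₀ r := by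
      rw [mem_closedBall_iff_norm, y_sub_eq, norm_smul, Real.norm_of_nonneg θ_pos.le, ← mul_assoc,
        div_mul_cancel₀ _ d_pos.ne', mul_comm] at hy
      exact mem_closedBall_iff_norm.2 (le_of_mul_le_mul_right hy θ_pos)
    have y_eq : y = x + θ • (y' - x) := by simp [y', smul_inv_smul₀ θ_pos.ne']
    rw [y_eq]
    exact hconv.add_smul_sub_mem hx (ball_subset y'_mem) ⟨θ_pos.le, by nlinarith⟩

/-- A quadrature rule for a measure `Q`, both concentrated within distance `r` of `c`, that
integrates the powers of degree at most `n` of affine functions of the squared distance to an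
arbitrary point exactly and is stable with constant `A`. -/
structure IsLocalRule {E ι : Type*} [NormedAddCommGroup E] [MeasurableSpace E] [Fintype ι]
    (n : ℕ) (A r : ℝ) (Q : Measure E) (w : ι → ℝ) (u : ι → E) (c : E) : Prop where
  measure_near : ∀ᵐ x ∂Q, ‖x - c‖ ≤ r
  nodes_near : ∀ i, w i ≠ 0 → ‖u i - c‖ ≤ r
  sum_abs_le : ∑ i, |w i| ≤ A * Q.real Set.univ
  exact_pow : ∀ (y : E) (a b : ℝ) (k : ℕ), 2 * k ≤ n →
    quadErr Q w u (fun x => (a + b * ‖x - y‖ ^ 2) ^ k) = 0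

lemma exists_scaled_grid_mem (n : ℕ) {U : Set (EuclideanSpace ℝ (Fin s))}
    (hU : HasInteriorCorkscrew U) :
    ∃ R > 0, ∃ ρ₀ > 0, ∀ c ∈ U, ∀ ρ, 0 < ρ → ρ ≤ ρ₀ → ∃ z, ‖z - c‖ ≤ R * ρ ∧
      ∀ α : Fin s → Fin (n + 1), z + ρ • gridPoint α ∈ U ∧ ‖z + ρ • gridPoint α - c‖ ≤ R * ρ := by
  obtain ⟨κ, κ_pos, t₀, t₀_pos, corkscrew⟩ := hU
  obtain ⟨G, G_pos, norm_gridPoint_le⟩ :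
      ∃ G > 0, ∀ α : Fin s → Fin (n + 1), ‖gridPoint α‖ ≤ G :=
    have ⟨G, hG⟩ := (Set.finite_range fun α : Fin s → Fin (n + 1) => ‖gridPoint α‖).bddAbove
    ⟨max G 1, by positivity, fun α => (hG ⟨α, rfl⟩).trans (le_max_left _ _)⟩
  refine ⟨G / κ + G, by positivity, t₀ / (G / κ), by positivity, fun c hc ρ ρ_pos hρ => ?_⟩
  obtain ⟨z, z_near, ball_subset⟩ := corkscrew c hc (G / κ * ρ) (by positivity)
    ((le_div_iff₀' (by positivity)).1 hρ)
  rw [mem_closedBall_iff_norm] at z_near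
  have norm_smul_gridPoint_le (α : Fin s → Fin (n + 1)) : ‖ρ • gridPoint α‖ ≤ G * ρ := by
    rw [norm_smul, Real.norm_of_nonneg ρ_pos.le, mul_comm]
    exact mul_le_mul_of_nonneg_right (norm_gridPoint_le α) ρ_pos.le
  refine ⟨z, z_near.trans (by nlinarith), fun α => ⟨ball_subset ?_, ?_⟩⟩
  · rw [mem_closedBall_iff_norm, add_sub_cancel_left, ← mul_assoc, mul_div_cancel₀ _ κ_pos.ne']
    exact norm_smul_gridPoint_le α
  · rw [add_sub_right_comm, add_mul]
    exact norm_add_le_of_le z_near (norm_smul_gridPoint_le α)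

lemma exists_isLocalRule (n : ℕ) {U : Set (EuclideanSpace ℝ (Fin s))}
    (hU : HasInteriorCorkscrew U) :
    ∃ h₀ > 0, ∃ A > 0, ∃ R ≥ 1, ∀ h, 0 < h → h ≤ h₀ →
      ∀ {m : ℕ} {u : Fin m → EuclideanSpace ℝ (Fin s)}, (∀ v ∈ U, ∃ i, ‖v - u i‖ ≤ h) →
      ∀ {Q : Measure (EuclideanSpace ℝ (Fin s))} [IsFiniteMeasure Q],
      ∀ c ∈ U, (∀ᵐ x ∂Q, ‖x - c‖ ≤ h) →
      ∃ w : Fin m → ℝ, IsLocalRule n A (R * h) Q w u c := by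
  obtain ⟨R, R_pos, ρ₀, ρ₀_pos, exists_grid⟩ := exists_scaled_grid_mem n hU
  obtain ⟨δ, δ_pos, A, A_pos, exists_weights⟩ := exists_weights_quadErr_sq_dist_pow_eq_zero s n
  let b : ℝ := δ + R + 1
  refine ⟨ρ₀ * δ, by positivity, A * (b ^ n) ^ s, by positivity, 1 + R / δ,
    le_add_of_nonneg_right (by positivity), fun h h_pos hh₀ {m u} hu {Q} _ c hc hQ => ?_⟩
  -- The grid has mesh `ρ`, so that `h = δ * ρ` is the displacement it tolerates.
  obtain ⟨ρ, ρ_pos, rfl⟩ : ∃ ρ > 0, h = δ * ρ := ⟨h / δ, by positivity, by field⟩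
  have radius_eq : (1 + R / δ) * (δ * ρ) = δ * ρ + R * ρ := by field
  obtain ⟨z, z_near, grid_mem⟩ := exists_grid c hc ρ ρ_pos (by nlinarith)
  choose τ hτ using fun α => hu _ (grid_mem α).1
  have measure_near_z : ∀ᵐ x ∂Q, ‖x - z‖ ≤ b * ρ := by
    filter_upwards [hQ] with x hx
    have := norm_sub_le_norm_sub_add_norm_sub x c z
    rw [norm_sub_rev c z] at this
    simp only [b]
    linarith
  obtain ⟨w, sum_abs_le, exact_pow⟩ := exists_weights ρ_pos hτ (by simp only [b]; linarith)
    measure_near_z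
  refine ⟨fun i => ∑ α with τ α = i, w α, hQ.mono fun x hx => ?_, fun i hi => ?_, ?_, ?_⟩
  · rw [radius_eq]
    exact hx.trans (le_add_of_nonneg_right (by positivity))
  · obtain ⟨α, hα, -⟩ := Finset.exists_ne_zero_of_sum_ne_zero hi
    rw [← (Finset.mem_filter.1 hα).2, radius_eq]
    refine (norm_sub_le_norm_sub_add_norm_sub _ (z + ρ • gridPoint α) _).trans ?_
    exact add_le_add ((norm_sub_rev _ _).trans_le (hτ α)) (grid_mem α).2
  · exact (sum_abs_fiberSum_le w τ).trans (sum_abs_le.trans_eq (mul_assoc _ _ _).symm)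
  · intro y a c k hk
    rw [quadErr_fiberSum]
    exact exact_pow y a c k hk

end LocalRule

section GaussTaylor

variable {E : Type*} [NormedAddCommGroup E]

lemma abs_exp_sub_sum_le (T : ℝ) (n : ℕ) :
    |Real.exp T - ∑ k ∈ Finset.range n, T ^ k / k.factorial| ≤ |T| ^ n * Real.exp |T| := by
  have := Complex.norm_exp_sub_sum_le_norm_mul_exp (T : ℂ) n
  rw [Complex.norm_real, Real.norm_eq_abs] at this
  rw [← Real.norm_eq_abs, ← Complex.norm_real]
  exact_mod_cast this

lemma abs_exp_sub_sum_le_of_abs_le_mul {T ε B : ℝ} (hε : 0 ≤ ε) (hε' : ε ≤ 1) (hB : 0 ≤ B)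
    (hT : |T| ≤ ε * B) (n : ℕ) :
    |Real.exp T - ∑ k ∈ Finset.range n, T ^ k / k.factorial| ≤
      n.factorial * ε ^ n * Real.exp (2 * B) := by
  have abs_T_le : |T| ≤ B := hT.trans (mul_le_of_le_one_left hB hε')
  have pow_le : B ^ n ≤ n.factorial * Real.exp B :=
    (div_le_iff₀' (by positivity)).1 (Real.pow_div_factorial_le_exp B hB n)
  calc |Real.exp T - ∑ k ∈ Finset.range n, T ^ k / k.factorial|
      ≤ |T| ^ n * Real.exp |T| := abs_exp_sub_sum_le T n
    _ ≤ (ε * B) ^ n * Real.exp B := by gcongr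
    _ = ε ^ n * B ^ n * Real.exp B := by rw [mul_pow]
    _ ≤ ε ^ n * (n.factorial * Real.exp B) * Real.exp B := by gcongr
    _ = n.factorial * ε ^ n * Real.exp (2 * B) := by rw [two_mul, Real.exp_add]; ring

lemma abs_norm_sub_sub_norm_sub_le {c c' x y : E} {r : ℝ} (hx : ‖x - c‖ ≤ r) (hy : ‖y - c'‖ ≤ r) :
    |‖c - c'‖ - ‖x - y‖| ≤ 2 * r := by
  have diff_eq : c - c' - (x - y) = (y - c') - (x - c) := by abel
  refine (abs_norm_sub_norm_le _ _).trans ?_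
  rw [diff_eq, two_mul]
  exact norm_sub_le_of_le hy hx

lemma abs_sq_div_sub_sq_div_le {D r R h q : ℝ} (hD : 0 ≤ D) (hr : 0 ≤ r) (hR : 0 ≤ R) (hh : 0 ≤ h)
    (hq : 0 < q) (hhq : h ≤ q) (hDr : |D - r| ≤ 2 * (R * h)) :
    |D ^ 2 / q ^ 2 - r ^ 2 / q ^ 2| ≤ h / q * (4 * R * (D / q) + 4 * R ^ 2) := by
  have add_le : D + r ≤ 2 * D + 2 * (R * q) := by
    have := (abs_le.1 hDr).1
    have : R * h ≤ R * q := by gcongr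
    linarith
  calc |D ^ 2 / q ^ 2 - r ^ 2 / q ^ 2| = |D - r| * (D + r) / q ^ 2 := by
        rw [← sub_div, sq_sub_sq, abs_div, abs_mul, abs_of_nonneg (add_nonneg hD hr),
          abs_of_pos (pow_pos hq 2), mul_comm]
    _ ≤ 2 * (R * h) * (2 * D + 2 * (R * q)) / q ^ 2 := by gcongr
    _ = h / q * (4 * R * (D / q) + 4 * R ^ 2) := by field

/-- The Taylor polynomial of degree below `n` of the Gaussian kernel `gaussKernel σ x y` as a
function of the squared distance `‖y - x‖ ^ 2`, about the squared distance `D ^ 2`. -/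
noncomputable def gaussTaylor (σ D : ℝ) (n : ℕ) (x y : E) : ℝ :=
  Real.exp (-(D ^ 2 / σ)) *
    ∑ k ∈ Finset.range n, (D ^ 2 / σ + -(1 / σ) * ‖y - x‖ ^ 2) ^ k / k.factorial

lemma abs_gaussKernel_sub_gaussTaylor_le {R h σ : ℝ} (κ : ℕ) (hR : 0 ≤ R) (hh : 0 < h)
    (hσ : h ^ 2 ≤ σ) {c c' x y : E} (hx : ‖x - c‖ ≤ R * h) (hy : ‖y - c'‖ ≤ R * h) :
    |gaussKernel σ x y - gaussTaylor σ ‖c - c'‖ (2 * κ) x y| ≤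
      (2 * κ).factorial * Real.exp (40 * R ^ 2) * (h ^ 2 / σ) ^ κ *
        Real.exp (-(‖c - c'‖ ^ 2 / (2 * σ))) := by
  obtain ⟨q, q_pos, rfl⟩ : ∃ q > 0, σ = q ^ 2 :=
    have σ_pos : 0 < σ := (pow_pos hh 2).trans_le hσ
    ⟨√σ, Real.sqrt_pos.2 σ_pos, (Real.sq_sqrt σ_pos.le).symm⟩
  have h_le : h ≤ q := (pow_le_pow_iff_left₀ hh.le q_pos.le two_ne_zero).1 hσ
  set D := ‖c - c'‖
  set T := D ^ 2 / q ^ 2 + -(1 / q ^ 2) * ‖y - x‖ ^ 2 with hT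
  let B := 4 * R * (D / q) + 4 * R ^ 2
  have kernel_eq : gaussKernel (q ^ 2) x y = Real.exp (-(D ^ 2 / q ^ 2)) * Real.exp T := by
    rw [gaussKernel, ← Real.exp_add, hT, norm_sub_rev x y]
    ring_nf
  have abs_T_le : |T| ≤ h / q * B := by
    convert abs_sq_div_sub_sq_div_le (norm_nonneg _) (norm_nonneg _) hR hh.le q_pos h_le
      (abs_norm_sub_sub_norm_sub_le hx hy) using 2
    rw [hT, norm_sub_rev y x]
    ring
  have remainder_le := abs_exp_sub_sum_le_of_abs_le_mul (by positivity) ((div_le_one q_pos).2 h_le)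
    (by positivity) abs_T_le (2 * κ)
  have exponent_le : -(D ^ 2 / q ^ 2) + 2 * B ≤ 40 * R ^ 2 + -(D ^ 2 / (2 * q ^ 2)) := by
    have : D ^ 2 / (2 * q ^ 2) = (D / q) ^ 2 / 2 := by field
    rw [this, ← div_pow]
    nlinarith [sq_nonneg (D / q - 8 * R)]
  rw [kernel_eq, gaussTaylor, ← mul_sub, abs_mul, Real.abs_exp]
  calc Real.exp (-(D ^ 2 / q ^ 2)) *
        |Real.exp T - ∑ k ∈ Finset.range (2 * κ), T ^ k / k.factorial|
      ≤ Real.exp (-(D ^ 2 / q ^ 2)) *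
        ((2 * κ).factorial * (h / q) ^ (2 * κ) * Real.exp (2 * B)) := by gcongr
    _ = (2 * κ).factorial * (h ^ 2 / q ^ 2) ^ κ * Real.exp (-(D ^ 2 / q ^ 2) + 2 * B) := by
        rw [pow_mul, div_pow, Real.exp_add]; ring
    _ ≤ (2 * κ).factorial * (h ^ 2 / q ^ 2) ^ κ *
        Real.exp (40 * R ^ 2 + -(D ^ 2 / (2 * q ^ 2))) := by gcongr
    _ = _ := by rw [Real.exp_add]; ring

lemma gaussKernel_le_of_le_sq {R h σ : ℝ} (hh : 0 < h) (hσ₀ : 0 < σ) (hσ : σ ≤ h ^ 2)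
    {c c' x y : E} (hx : ‖x - c‖ ≤ R * h) (hy : ‖y - c'‖ ≤ R * h) :
    gaussKernel σ x y ≤ Real.exp (40 * R ^ 2) * Real.exp (-(‖c - c'‖ ^ 2 / (2 * h ^ 2))) := by
  have center_dist_le : ‖c - c'‖ ≤ ‖x - y‖ + 2 * (R * h) := by
    linarith [(abs_le.1 (abs_norm_sub_sub_norm_sub_le hx hy)).2]
  have center_dist_sq_le : ‖c - c'‖ ^ 2 / (2 * h ^ 2) ≤ ‖x - y‖ ^ 2 / h ^ 2 + 4 * R ^ 2 := by
    rw [div_le_iff₀ (by positivity)]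
    calc ‖c - c'‖ ^ 2 ≤ (‖x - y‖ + 2 * (R * h)) ^ 2 := by gcongr
      _ ≤ 2 * ‖x - y‖ ^ 2 + 2 * (2 * (R * h)) ^ 2 := by
        nlinarith [sq_nonneg (‖x - y‖ - 2 * (R * h))]
      _ = (‖x - y‖ ^ 2 / h ^ 2 + 4 * R ^ 2) * (2 * h ^ 2) := by field
  have : ‖x - y‖ ^ 2 / h ^ 2 ≤ ‖x - y‖ ^ 2 / σ := by gcongr
  rw [gaussKernel, ← Real.exp_add, Real.exp_le_exp]
  linarith [sq_nonneg R]

end GaussTaylor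

section LocalRuleGauss

variable {E ι : Type*} [NormedAddCommGroup E] [MeasurableSpace E] [Fintype ι] {n : ℕ} {A r : ℝ}
  {Q : Measure E} {w : ι → ℝ} {u : ι → E} {c : E} [IsFiniteMeasure Q]

lemma IsLocalRule.abs_quadErr_le (hw : IsLocalRule n A r Q w u c) {g : E → ℝ} {B : ℝ}
    (hB : 0 ≤ B) (hg : ∀ y, ‖y - c‖ ≤ r → |g y| ≤ B) :
    |quadErr Q w u g| ≤ (1 + A) * Q.real Set.univ * B := by
  refine (_root_.abs_quadErr_le Q w u (hw.measure_near.mono fun y hy => hg y hy)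
    fun i hi => hg _ (hw.nodes_near i hi)).trans (mul_le_mul_of_nonneg_right ?_ hB)
  rw [quadMass]
  linarith [hw.sum_abs_le]

variable [ProperSpace E] [BorelSpace E]

lemma IsLocalRule.integrable_of_continuous (hw : IsLocalRule n A r Q w u c) {g : E → ℝ}
    (hg : Continuous g) : Integrable g Q := by
  obtain ⟨M, hM⟩ := (isCompact_closedBall c r).exists_bound_of_continuousOn hg.continuousOn
  exact .of_bound hg.aestronglyMeasurable M
    (hw.measure_near.mono fun y hy => hM y (mem_closedBall_iff_norm.2 hy))

lemma IsLocalRule.quadErr_gaussTaylor (hw : IsLocalRule n A r Q w u c) (σ D : ℝ) {N : ℕ}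
    (hN : 2 * N ≤ n) (x : E) : quadErr Q w u (gaussTaylor σ D N x) = 0 := by
  unfold gaussTaylor
  simp only [div_eq_mul_inv]
  rw [quadErr_const_mul, quadErr_finsetSum _ _ _ fun k _ =>
    hw.integrable_of_continuous (by fun_prop)]
  refine mul_eq_zero_of_right _ (Finset.sum_eq_zero fun k hk => ?_)
  rw [quadErr_mul_const, hw.exact_pow _ _ _ _ (by have := Finset.mem_range.1 hk; lia), zero_mul]

lemma IsLocalRule.abs_quadErr_gaussKernel_le {κ : ℕ} {R h σ : ℝ}
    (hw : IsLocalRule (4 * κ) A (R * h) Q w u c) (hR : 0 ≤ R) (hh : 0 < h) (hσ : 0 < σ)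
    {c' x : E} (hx : ‖x - c'‖ ≤ R * h) :
    |quadErr Q w u (gaussKernel σ x)| ≤ (1 + A) * Q.real Set.univ *
      ((2 * κ).factorial * Real.exp (40 * R ^ 2) * (h ^ 2 / max σ (h ^ 2)) ^ κ *
        Real.exp (-(‖c' - c‖ ^ 2 / (2 * max σ (h ^ 2))))) := by
  rcases le_total (h ^ 2) σ with h_sq_le | σ_le
  · rw [max_eq_left h_sq_le]
    have continuous_gaussKernel : Continuous (gaussKernel σ x) := by
      unfold gaussKernel
      fun_prop
    have continuous_gaussTaylor : Continuous (gaussTaylor σ ‖c' - c‖ (2 * κ) x) := by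
      unfold gaussTaylor
      fun_prop
    have quadErr_eq := quadErr_sub w u (hw.integrable_of_continuous continuous_gaussKernel)
      (hw.integrable_of_continuous continuous_gaussTaylor)
    rw [hw.quadErr_gaussTaylor σ ‖c' - c‖ (by lia), sub_zero] at quadErr_eq
    rw [← quadErr_eq]
    exact hw.abs_quadErr_le (by positivity) fun y hy =>
      abs_gaussKernel_sub_gaussTaylor_le κ hR hh h_sq_le hx hy
  · rw [max_eq_right σ_le, div_self (by positivity), one_pow, mul_one, mul_assoc _ (Real.exp _)]
    refine hw.abs_quadErr_le (by positivity) fun y hy => ?_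
    rw [abs_of_pos (by exact Real.exp_pos _)]
    refine (gaussKernel_le_of_le_sq hh hσ σ_le hx hy).trans (le_mul_of_one_le_left ?_ ?_)
    · positivity
    · exact Nat.one_le_cast.2 (Nat.factorial_pos _)

lemma IsLocalRule.abs_quadErr_quadErr_gaussKernel_le {κ : ℕ} {R h σ : ℝ} {Q' : Measure E}
    [IsFiniteMeasure Q'] {w' : ι → ℝ} {c' : E} (hw : IsLocalRule (4 * κ) A (R * h) Q w u c)
    (hw' : IsLocalRule (4 * κ) A (R * h) Q' w' u c') (hA : 0 ≤ A) (hR : 0 ≤ R) (hh : 0 < h)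
    (hσ : 0 < σ) :
    |quadErr Q w u fun x => quadErr Q' w' u (gaussKernel σ x)| ≤
      (1 + A) ^ 2 * ((2 * κ).factorial * Real.exp (40 * R ^ 2)) *
      (h ^ 2 / max σ (h ^ 2)) ^ κ * (Q.real Set.univ * (Q'.real Set.univ *
        Real.exp (-(‖c - c'‖ ^ 2 / (2 * max σ (h ^ 2)))))) := by
  refine (hw.abs_quadErr_le ?_ fun x hx =>
    hw'.abs_quadErr_gaussKernel_le hR hh hσ hx).trans_eq (by ring)
  positivity

end LocalRuleGauss

section MixingIntegral

open ProbabilityTheory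

variable {ν p H : ℝ}

lemma rpow_mul_div_max_rpow_of_le {σ : ℝ} (hH : 0 < H) (hσ : σ ≤ H) :
    σ ^ (ν - 1) * (H / max σ H) ^ p = σ ^ (ν - 1) := by
  rw [max_eq_right hσ, div_self hH.ne', Real.one_rpow, mul_one]

lemma rpow_mul_div_max_rpow_of_ge {σ : ℝ} (hH : 0 < H) (hσ : H ≤ σ) :
    σ ^ (ν - 1) * (H / max σ H) ^ p = H ^ p * σ ^ (ν - 1 - p) := by
  have σ_pos : 0 < σ := hH.trans_le hσ
  rw [max_eq_left hσ, Real.div_rpow hH.le σ_pos.le, Real.rpow_sub σ_pos (ν - 1) p]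
  ring

lemma integrableOn_rpow_mul_div_max_rpow_Ioc (hν : 0 < ν) (hH : 0 < H) :
    IntegrableOn (fun σ => σ ^ (ν - 1) * (H / max σ H) ^ p) (Set.Ioc 0 H) :=
  (intervalIntegral.intervalIntegrable_rpow' (by linarith)).1.congr_fun
    (fun _ hσ => (rpow_mul_div_max_rpow_of_le hH hσ.2).symm) measurableSet_Ioc

lemma integrableOn_rpow_mul_div_max_rpow_Ioi (hνp : ν < p) (hH : 0 < H) :
    IntegrableOn (fun σ => σ ^ (ν - 1) * (H / max σ H) ^ p) (Set.Ioi H) :=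
  IntegrableOn.congr_fun
    ((integrableOn_Ioi_rpow_of_lt (a := ν - 1 - p) (by linarith) hH).const_mul _)
    (fun _ hσ => (rpow_mul_div_max_rpow_of_ge hH (le_of_lt hσ)).symm) measurableSet_Ioi

lemma integrableOn_rpow_mul_div_max_rpow (hν : 0 < ν) (hνp : ν < p) (hH : 0 < H) :
    IntegrableOn (fun σ => σ ^ (ν - 1) * (H / max σ H) ^ p) (Set.Ioi 0) := by
  rw [← Set.Ioc_union_Ioi_eq_Ioi hH.le]
  exact (integrableOn_rpow_mul_div_max_rpow_Ioc hν hH).union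
    (integrableOn_rpow_mul_div_max_rpow_Ioi hνp hH)

lemma integral_rpow_mul_div_max_rpow (hν : 0 < ν) (hνp : ν < p) (hH : 0 < H) :
    ∫ σ in Set.Ioi (0 : ℝ), σ ^ (ν - 1) * (H / max σ H) ^ p = (1 / ν + 1 / (p - ν)) * H ^ ν := by
  have integral_Ioc : ∫ σ in Set.Ioc 0 H, σ ^ (ν - 1) * (H / max σ H) ^ p = H ^ ν / ν := by
    rw [setIntegral_congr_fun measurableSet_Ioc fun σ hσ => rpow_mul_div_max_rpow_of_le hH hσ.2,
      ← intervalIntegral.integral_of_le hH.le, integral_rpow (Or.inl (by linarith)),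
      sub_add_cancel, Real.zero_rpow hν.ne', sub_zero]
  have integral_Ioi : ∫ σ in Set.Ioi H, σ ^ (ν - 1) * (H / max σ H) ^ p = H ^ ν / (p - ν) := by
    rw [setIntegral_congr_fun measurableSet_Ioi fun σ hσ =>
        rpow_mul_div_max_rpow_of_ge hH (le_of_lt hσ), integral_const_mul,
      integral_Ioi_rpow_of_lt (by linarith) hH, sub_right_comm, sub_add_cancel, neg_div,
      ← div_neg, neg_sub, ← mul_div_assoc, ← Real.rpow_add hH, add_sub_cancel]
  rw [← Set.Ioc_union_Ioi_eq_Ioi hH.le,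
    setIntegral_union (Set.Ioc_disjoint_Ioi le_rfl) measurableSet_Ioi
      (integrableOn_rpow_mul_div_max_rpow_Ioc hν hH)
      (integrableOn_rpow_mul_div_max_rpow_Ioi hνp hH), integral_Ioc, integral_Ioi]
  ring

lemma integral_gammaMeasure_div_max_rpow_le {a : ℝ} (hν : 0 < ν) (ha : 0 < a) (hνp : ν < p)
    (hH : 0 < H) : ∫ σ, (H / max σ H) ^ p ∂(gammaMeasure ν a) ≤
      a ^ ν / Real.Gamma ν * ((1 / ν + 1 / (p - ν)) * H ^ ν) := by
  have := Real.Gamma_pos_of_pos hν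
  rw [integral_gammaMeasure hν ha, ← integral_rpow_mul_div_max_rpow hν hνp hH,
    ← integral_const_mul]
  refine integral_mono_of_nonneg ?_ ((integrableOn_rpow_mul_div_max_rpow hν hνp hH).const_mul _) ?_
  all_goals
    filter_upwards [ae_restrict_mem measurableSet_Ioi] with σ hσ
    have : 0 < σ := hσ
  · simp only [Pi.zero_apply]
    positivity
  · have exp_le_one : Real.exp (-(a * σ)) ≤ 1 := by
      rw [Real.exp_le_one_iff, neg_nonpos]
      positivity
    rw [← mul_assoc]
    exact mul_le_mul_of_nonneg_right (mul_le_of_le_one_right (by positivity) exp_le_one)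
      (by positivity)

lemma integrable_gammaMeasure_div_max_rpow {a : ℝ} (hν : 0 < ν) (ha : 0 < a) (hp : 0 ≤ p)
    (hH : 0 < H) : Integrable (fun σ => (H / max σ H) ^ p) (gammaMeasure ν a) := by
  have := isProbabilityMeasure_gammaMeasure hν ha
  refine .of_bound (Measurable.aestronglyMeasurable (by fun_prop)) 1 (ae_of_all _ fun σ => ?_)
  have : 0 < max σ H := lt_max_of_lt_right hH
  rw [Real.norm_of_nonneg (by positivity)]
  exact Real.rpow_le_one (by positivity) (div_le_one_of_le₀ (le_max_right _ _) this.le) hp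

end MixingIntegral

section CompositeRule

lemma exists_measurable_disjoint_subset_closedBall {E : Type*} [PseudoMetricSpace E]
    [MeasurableSpace E] [OpensMeasurableSpace E] {m : ℕ} (u : Fin m → E) (h : ℝ) :
    ∃ D : Fin m → Set E, (∀ i, MeasurableSet (D i)) ∧ Pairwise (Function.onFun Disjoint D) ∧
      (∀ i, D i ⊆ Metric.closedBall (u i) h) ∧ ⋃ i, D i = ⋃ i, Metric.closedBall (u i) h :=
  ⟨disjointed fun i => Metric.closedBall (u i) h,
    fun _ => disjointedRec (fun _ _ ht => ht.diff measurableSet_closedBall)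
      measurableSet_closedBall,
    disjoint_disjointed _, fun i => disjointed_subset _ i, iUnion_disjointed⟩

lemma integral_gaussKernel_le {E : Type*} [NormedAddCommGroup E] [InnerProductSpace ℝ E]
    [FiniteDimensional ℝ E] [MeasurableSpace E] [BorelSpace E] {P : Measure E} {C : NNReal}
    (hP : P ≤ C • volume) {S : ℝ} (hS : 0 < S) (x : E) :
    ∫ y, gaussKernel S x y ∂P ≤ C * (Real.pi * S) ^ (Module.finrank ℝ E / 2 : ℝ) := by
  have gaussKernel_eq (y : E) : gaussKernel S x y = Real.exp (-S⁻¹ * ‖x - y‖ ^ 2) := by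
    rw [gaussKernel, neg_mul, div_eq_inv_mul]
  have integrable_gaussKernel : Integrable (gaussKernel S x) := by
    rw [funext gaussKernel_eq]
    exact (integrable_exp_neg_mul_norm_sq (E := E) (inv_pos.2 hS)).comp_sub_left x
  have integral_volume :
      ∫ y, gaussKernel S x y = (Real.pi * S) ^ (Module.finrank ℝ E / 2 : ℝ) := by
    simp only [gaussKernel_eq]
    rw [integral_sub_left_eq_self fun z : E => Real.exp (-S⁻¹ * ‖z‖ ^ 2),
      GaussianFourier.integral_rexp_neg_mul_sq_norm (inv_pos.2 hS), div_inv_eq_mul]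
  calc ∫ y, gaussKernel S x y ∂P
      ≤ ∫ y, gaussKernel S x y ∂(C • volume : Measure E) :=
        integral_mono_measure hP (ae_of_all _ fun y => (Real.exp_pos _).le)
          integrable_gaussKernel.smul_measure_nnreal
    _ = C * (Real.pi * S) ^ (Module.finrank ℝ E / 2 : ℝ) := by
        rw [integral_smul_nnreal_measure, integral_volume, NNReal.smul_def, smul_eq_mul]

variable {E κ : Type*} [NormedAddCommGroup E] [Fintype κ] {D : κ → Set E} {c : κ → E} {h : ℝ}

lemma exp_neg_sq_dist_le_gaussKernel {S : ℝ} (hS : 0 < S) (hhS : h ^ 2 ≤ S) {v x y : E}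
    (hy : ‖y - v‖ ≤ h) :
    Real.exp (-(‖x - v‖ ^ 2 / (2 * S))) ≤ Real.exp 1 * gaussKernel (4 * S) x y := by
  have dist_le : ‖x - y‖ ≤ ‖x - v‖ + h := by
    refine (norm_sub_le_norm_sub_add_norm_sub x v y).trans ?_
    rw [norm_sub_rev v y]
    gcongr
  have sq_dist_le : ‖x - y‖ ^ 2 ≤ 2 * ‖x - v‖ ^ 2 + 2 * S := by
    have := pow_le_pow_left₀ (norm_nonneg _) dist_le 2
    nlinarith [sq_nonneg (‖x - v‖ - h)]
  rw [gaussKernel, ← Real.exp_add, Real.exp_le_exp]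
  have : ‖x - y‖ ^ 2 / (4 * S) ≤ (2 * ‖x - v‖ ^ 2 + 2 * S) / (4 * S) := by gcongr
  have : (2 * ‖x - v‖ ^ 2 + 2 * S) / (4 * S) = ‖x - v‖ ^ 2 / (2 * S) + 1 / 2 := by field
  linarith

variable [MeasurableSpace E] {P : Measure E} [IsFiniteMeasure P]

lemma sum_measureReal_restrict_univ {X : Type*} [MeasurableSpace X] {P : Measure X}
    [IsFiniteMeasure P] {D : κ → Set X} (hDm : ∀ k, MeasurableSet (D k))
    (hDd : Pairwise (Function.onFun Disjoint D)) (hDP : ∀ᵐ x ∂P, x ∈ ⋃ k, D k) :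
    ∑ k, (P.restrict (D k)).real Set.univ = P.real Set.univ := by
  simp only [measureReal_restrict_apply_univ]
  rw [← measureReal_iUnion_fintype hDd hDm, ← measureReal_restrict_apply_univ,
    Measure.restrict_eq_self_of_ae_mem hDP]

variable [BorelSpace E] [SecondCountableTopology E]

lemma sum_measureReal_mul_exp_neg_sq_dist_le (hDm : ∀ k, MeasurableSet (D k))
    (hDd : Pairwise (Function.onFun Disjoint D)) (hDP : ∀ᵐ x ∂P, x ∈ ⋃ k, D k)
    (hDc : ∀ k, D k ⊆ Metric.closedBall (c k) h) {S : ℝ} (hS : 0 < S) (hhS : h ^ 2 ≤ S) (x : E) :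
    ∑ k, (P.restrict (D k)).real Set.univ * Real.exp (-(‖x - c k‖ ^ 2 / (2 * S))) ≤
      Real.exp 1 * ∫ y, gaussKernel (4 * S) x y ∂P := by
  have integrable_gaussKernel : Integrable (gaussKernel (4 * S) x) P :=
    .of_bound (by unfold gaussKernel; fun_prop) 1
      (ae_of_all _ (abs_gaussKernel_le_one (by positivity) x))
  have integrable_const_mul := integrable_gaussKernel.const_mul (Real.exp 1)
  rw [← integral_const_mul, ← Measure.restrict_eq_self_of_ae_mem hDP,
    integral_iUnion_fintype hDm hDd fun k => integrable_const_mul.integrableOn]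
  simp only [Measure.restrict_eq_self_of_ae_mem hDP]
  refine Finset.sum_le_sum fun k _ => ?_
  rw [← smul_eq_mul, ← integral_const]
  exact setIntegral_mono_on (integrable_const _) integrable_const_mul.integrableOn (hDm k)
    fun y hy => exp_neg_sq_dist_le_gaussKernel hS hhS (mem_closedBall_iff_norm.1 (hDc k hy))

lemma quadEnergy_gaussKernel_sum_isLocalRule_le [ProperSpace E] {ι : Type*} [Fintype ι]
    {u : ι → E} {w : κ → ι → ℝ} {A R σ I : ℝ} {n : ℕ}
    (hDm : ∀ k, MeasurableSet (D k)) (hDd : Pairwise (Function.onFun Disjoint D))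
    (hDP : ∀ᵐ x ∂P, x ∈ ⋃ k, D k) (hDc : ∀ k, D k ⊆ Metric.closedBall (c k) h)
    (hw : ∀ k, IsLocalRule (4 * n) A (R * h) (P.restrict (D k)) (w k) u (c k))
    (hA : 0 ≤ A) (hR : 0 ≤ R) (hh : 0 < h) (hσ : 0 < σ)
    (hI : ∀ x, ∫ y, gaussKernel (4 * max σ (h ^ 2)) x y ∂P ≤ I) :
    quadEnergy P (fun i => ∑ k, w k i) u (gaussKernel σ) ≤
      (1 + A) ^ 2 * ((2 * n).factorial * Real.exp (40 * R ^ 2)) * (h ^ 2 / max σ (h ^ 2)) ^ n *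
        (P.real Set.univ * (Real.exp 1 * I)) := by
  set S := max σ (h ^ 2)
  set K := (1 + A) ^ 2 * ((2 * n).factorial * Real.exp (40 * R ^ 2))
  set M := fun k => (P.restrict (D k)).real Set.univ
  have S_pos : 0 < S := lt_max_of_lt_left hσ
  have row_sum_le (k : κ) :
      ∑ k', M k' * Real.exp (-(‖c k - c k'‖ ^ 2 / (2 * S))) ≤ Real.exp 1 * I :=
    (sum_measureReal_mul_exp_neg_sq_dist_le hDm hDd hDP hDc S_pos (le_max_right _ _) _).trans
      (mul_le_mul_of_nonneg_left (hI _) (Real.exp_pos _).le)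
  rw [quadEnergy_eq_sum_restrict u hDm hDd hDP w
    (F := gaussKernel σ) (measurable_gaussKernel.comp (f := fun q : E × E => ((σ, q.1), q.2))
      (by fun_prop))
    (abs_gaussKernel_le_one hσ)]
  calc ∑ k, ∑ k', quadErr (P.restrict (D k)) (w k) u (fun x =>
        quadErr (P.restrict (D k')) (w k') u fun y => gaussKernel σ x y)
      ≤ ∑ k, ∑ k', K * (h ^ 2 / S) ^ n *
          (M k * (M k' * Real.exp (-(‖c k - c k'‖ ^ 2 / (2 * S))))) :=
        Finset.sum_le_sum fun k _ => Finset.sum_le_sum fun k' _ => (le_abs_self _).trans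
          ((hw k).abs_quadErr_quadErr_gaussKernel_le (hw k') hA hR hh hσ)
    _ = K * (h ^ 2 / S) ^ n *
          ∑ k, M k * ∑ k', M k' * Real.exp (-(‖c k - c k'‖ ^ 2 / (2 * S))) := by
        simp only [Finset.mul_sum]
    _ ≤ K * (h ^ 2 / S) ^ n * ∑ k, M k * (Real.exp 1 * I) := by
        gcongr with k
        exact row_sum_le k
    _ = K * (h ^ 2 / S) ^ n * (P.real Set.univ * (Real.exp 1 * I)) := by
        rw [← Finset.sum_mul, sum_measureReal_restrict_univ hDm hDd hDP]

end CompositeRule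

section Energy

open ProbabilityTheory

variable {s : ℕ} {U : Set (EuclideanSpace ℝ (Fin s))} {P : Measure (EuclideanSpace ℝ (Fin s))}
  [IsFiniteMeasure P] {C : NNReal}

lemma exists_weights_quadEnergy_gaussKernel_le (hU : HasInteriorCorkscrew U)
    (hPU : ∀ᵐ x ∂P, x ∈ U) (hP : P ≤ C • volume) (n : ℕ) :
    ∃ h₀ > 0, ∃ K ≥ 0, ∀ h, 0 < h → h ≤ h₀ → ∀ {m : ℕ} {u : Fin m → EuclideanSpace ℝ (Fin s)},
      (∀ i, u i ∈ U) → (∀ v ∈ U, ∃ i, ‖v - u i‖ ≤ h) →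
      ∃ w : Fin m → ℝ, ∀ σ, 0 < σ → quadEnergy P w u (gaussKernel σ) ≤
        K * (h ^ 2 / max σ (h ^ 2)) ^ n * max σ (h ^ 2) ^ (s / 2 : ℝ) := by
  obtain ⟨h₀, h₀_pos, A, A_pos, R, one_le_R, exists_rule⟩ := exists_isLocalRule (4 * n) hU
  refine ⟨h₀, h₀_pos, (1 + A) ^ 2 * ((2 * n).factorial * Real.exp (40 * R ^ 2)) *
    (P.real Set.univ * (Real.exp 1 * (C * (Real.pi * 4) ^ (s / 2 : ℝ)))), by positivity,
    fun h h_pos hh₀ m u hu cover => ?_⟩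
  obtain ⟨D, hDm, hDd, hDu, hDU⟩ := exists_measurable_disjoint_subset_closedBall u h
  have hDP : ∀ᵐ x ∂P, x ∈ ⋃ i, D i := by
    filter_upwards [hPU] with x hx
    simpa only [hDU, Set.mem_iUnion, mem_closedBall_iff_norm] using cover x hx
  have near_node (i : Fin m) : ∀ᵐ x ∂(P.restrict (D i)), ‖x - u i‖ ≤ h := by
    filter_upwards [ae_restrict_mem (hDm i)] with x hx using mem_closedBall_iff_norm.1 (hDu i hx)
  choose w hw using fun i => exists_rule h h_pos hh₀ cover (u i) (hu i) (near_node i)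
  refine ⟨fun i => ∑ k, w k i, fun σ σ_pos => ?_⟩
  have S_pos : 0 < max σ (h ^ 2) := lt_max_of_lt_left σ_pos
  refine (quadEnergy_gaussKernel_sum_isLocalRule_le hDm hDd hDP hDu hw A_pos.le
    (zero_le_one.trans one_le_R) h_pos σ_pos
    fun x => integral_gaussKernel_le hP (by positivity) x).trans_eq ?_
  rw [finrank_euclideanSpace_fin, ← mul_assoc Real.pi, Real.mul_rpow (by positivity) S_pos.le]
  ring

lemma exists_weights_quadEnergy_gammaMixKernel_le (hU : HasInteriorCorkscrew U)
    (hPU : ∀ᵐ x ∂P, x ∈ U) (hP : P ≤ C • volume) {ν a : ℝ} (hν : 0 < ν) (ha : 0 < a) :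
    ∃ h₀ > 0, ∃ K ≥ 0, ∀ h, 0 < h → h ≤ h₀ → ∀ {m : ℕ} {u : Fin m → EuclideanSpace ℝ (Fin s)},
      (∀ i, u i ∈ U) → (∀ v ∈ U, ∃ i, ‖v - u i‖ ≤ h) →
      ∃ w : Fin m → ℝ,
        quadEnergy P w u (gammaMixKernel ν a) ≤ K * (h ^ 2) ^ (ν + s / 2 : ℝ) := by
  obtain ⟨n, hn⟩ := exists_nat_gt (ν + s / 2 : ℝ)
  obtain ⟨h₀, h₀_pos, K, K_nonneg, exists_weights⟩ :=
    exists_weights_quadEnergy_gaussKernel_le hU hPU hP n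
  set p : ℝ := n - s / 2
  have hνp : ν < p := lt_sub_iff_add_lt.2 hn
  have := Real.Gamma_pos_of_pos hν
  have := sub_pos.2 hνp
  refine ⟨h₀, h₀_pos, K * (a ^ ν / Real.Gamma ν * (1 / ν + 1 / (p - ν))), by positivity,
    fun h h_pos hh₀ m u hu cover => ?_⟩
  obtain ⟨w, energy_le⟩ := exists_weights h h_pos hh₀ hu cover
  refine ⟨w, ?_⟩
  have H_pos : 0 < h ^ 2 := by positivity
  have profile_eq {σ : ℝ} (hσ : 0 < σ) : K * (h ^ 2 / max σ (h ^ 2)) ^ n *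
      max σ (h ^ 2) ^ (s / 2 : ℝ) =
      K * (h ^ 2) ^ (s / 2 : ℝ) * (h ^ 2 / max σ (h ^ 2)) ^ p := by
    have S_pos : 0 < max σ (h ^ 2) := lt_max_of_lt_left hσ
    rw [Real.rpow_sub (by positivity), Real.rpow_natCast, Real.div_rpow H_pos.le S_pos.le]
    field
  rw [quadEnergy_gammaMixKernel P w u hν ha]
  calc ∫ σ, quadEnergy P w u (gaussKernel σ) ∂(gammaMeasure ν a)
      ≤ ∫ σ, K * (h ^ 2) ^ (s / 2 : ℝ) * (h ^ 2 / max σ (h ^ 2)) ^ p ∂(gammaMeasure ν a) := by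
        refine integral_mono_ae (integrable_quadEnergy_gaussKernel P w u hν ha)
          ((integrable_gammaMeasure_div_max_rpow hν ha (hν.trans hνp).le H_pos).const_mul _) ?_
        filter_upwards [ae_pos_gammaMeasure ν a] with σ hσ
          using (energy_le σ hσ).trans_eq (profile_eq hσ)
    _ ≤ K * (h ^ 2) ^ (s / 2 : ℝ) *
          (a ^ ν / Real.Gamma ν * ((1 / ν + 1 / (p - ν)) * (h ^ 2) ^ ν)) := by
        rw [integral_const_mul]
        gcongr
        exact integral_gammaMeasure_div_max_rpow_le hν ha hνp H_pos
    _ = K * (a ^ ν / Real.Gamma ν * (1 / ν + 1 / (p - ν))) * (h ^ 2) ^ (ν + s / 2 : ℝ) := by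
        rw [Real.rpow_add H_pos]
        ring

end Energy

section MaternKernelOn

variable {s : ℕ} {U : Set (EuclideanSpace ℝ (Fin s))} {ν η l : ℝ}

lemma maternKernelOn_eq_gammaMixKernel (hν : 0 < ν) (hl : 0 < l) (η : ℝ) :
    maternKernelOn U ν η l = fun x y => η * gammaMixKernel ν (ν / (2 * l ^ 2)) x.1 y.1 :=
  funext₂ fun x y => maternKernel_eq_gammaMixKernel hν hl η x.1 y.1

lemma maternKernelOn_eq_mul (hν : 0 < ν) (hl : 0 < l) (η : ℝ) :
    maternKernelOn U ν η l = fun x y => η * maternKernelOn U ν 1 l x y := by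
  simp only [maternKernelOn_eq_gammaMixKernel hν hl, one_mul]

lemma maternKernelOn_comm (hν : 0 < ν) (hl : 0 < l) (η : ℝ) (x y : U) :
    maternKernelOn U ν η l x y = maternKernelOn U ν η l y x := by
  simp only [maternKernelOn_eq_gammaMixKernel hν hl, gammaMixKernel_comm _ _ x.1]

lemma continuous_maternKernelOn (hν : 0 < ν) (hl : 0 < l) (η : ℝ) :
    Continuous (Function.uncurry (maternKernelOn U ν η l)) := by
  rw [maternKernelOn_eq_gammaMixKernel hν hl]
  exact continuous_const.mul ((continuous_gammaMixKernel hν (by positivity)).comp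
    (continuous_subtype_val.prodMap continuous_subtype_val))

lemma abs_maternKernelOn_le (hν : 0 < ν) (hl : 0 < l) (η : ℝ) (x y : U) :
    |maternKernelOn U ν η l x y| ≤ |η| := by
  rw [maternKernelOn_eq_gammaMixKernel hν hl, abs_mul]
  exact mul_le_of_le_one_right (abs_nonneg η)
    (abs_gammaMixKernel_le_one hν (by positivity) x.1 y.1)

variable {ι : Type*} [Fintype ι] (P : Measure U) (w : ι → ℝ) (u : ι → U)

lemma quadEnergy_maternKernelOn_eq_mul (hν : 0 < ν) (hl : 0 < l) (η : ℝ) :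
    quadEnergy P w u (maternKernelOn U ν η l) =
      η * quadEnergy P w u (maternKernelOn U ν 1 l) := by
  rw [maternKernelOn_eq_mul hν hl η, quadEnergy_const_mul]

lemma quadEnergy_maternKernelOn_one (hU : MeasurableSet U) (hν : 0 < ν) (hl : 0 < l) :
    quadEnergy P w u (maternKernelOn U ν 1 l) =
      quadEnergy (P.map Subtype.val) w (Subtype.val ∘ u) (gammaMixKernel ν (ν / (2 * l ^ 2))) := by
  rw [quadEnergy_map P w u (MeasurableEmbedding.subtype_coe hU),
    maternKernelOn_eq_gammaMixKernel hν hl]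
  simp only [one_mul]

lemma quadEnergy_zero_maternKernelOn_pos {w : ι → ℝ} {u : ι → U} (hU : MeasurableSet U)
    (hν : 0 < ν) (hη : 0 < η) (hl : 0 < l) (hu : Function.Injective u) (hw : w ≠ 0) :
    0 < quadEnergy 0 w u (maternKernelOn U ν η l) := by
  rw [quadEnergy_maternKernelOn_eq_mul 0 w u hν hl, quadEnergy_maternKernelOn_one 0 w u hU hν hl,
    Measure.map_zero]
  exact mul_pos hη (quadEnergy_zero_gammaMixKernel_pos hν (by positivity)
    (Subtype.val_injective.comp hu) hw)

variable [IsFiniteMeasure P]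

lemma quadEnergy_maternKernelOn_one_nonneg (hU : MeasurableSet U) (hν : 0 < ν) (hl : 0 < l) :
    0 ≤ quadEnergy P w u (maternKernelOn U ν 1 l) := by
  rw [quadEnergy_maternKernelOn_one P w u hU hν hl]
  exact quadEnergy_gammaMixKernel_nonneg _ w _ hν (by positivity)

lemma quadEnergy_maternKernelOn_one_le {l' : ℝ} (hU : MeasurableSet U) (hν : 0 < ν) (hl : 0 < l)
    (hl' : 0 < l') :
    quadEnergy P w u (maternKernelOn U ν 1 l) ≤
      (((l' / l) ^ 2) ^ ν + ((l / l') ^ 2) ^ (s / 2 : ℝ)) *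
        quadEnergy P w u (maternKernelOn U ν 1 l') := by
  have rate_div_rate {p q : ℝ} (hp : 0 < p) (hq : 0 < q) :
      ν / (2 * p ^ 2) / (ν / (2 * q ^ 2)) = (q / p) ^ 2 := by field
  rw [quadEnergy_maternKernelOn_one P w u hU hν hl, quadEnergy_maternKernelOn_one P w u hU hν hl',
    ← rate_div_rate hl hl', ← rate_div_rate hl' hl]
  simpa only [finrank_euclideanSpace_fin] using
    quadEnergy_gammaMixKernel_le (P.map Subtype.val) w (Subtype.val ∘ u) hν (a := ν / (2 * l ^ 2))
      (b := ν / (2 * l' ^ 2)) (by positivity) (by positivity)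

lemma quadEnergy_maternKernelOn_one_le_of_mem_Icc {l' lmin lmax : ℝ} (hU : MeasurableSet U)
    (hν : 0 < ν) (hlmin : 0 < lmin) (hl : l ∈ Set.Icc lmin lmax) (hl' : l' ∈ Set.Icc lmin lmax) :
    quadEnergy P w u (maternKernelOn U ν 1 l) ≤
      (((lmax / lmin) ^ 2) ^ ν + ((lmax / lmin) ^ 2) ^ (s / 2 : ℝ)) *
        quadEnergy P w u (maternKernelOn U ν 1 l') := by
  have l_pos : 0 < l := hlmin.trans_le hl.1
  have l'_pos : 0 < l' := hlmin.trans_le hl'.1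
  have lmax_nonneg : 0 ≤ lmax := l_pos.le.trans hl.2
  refine (quadEnergy_maternKernelOn_one_le P w u hU hν l_pos l'_pos).trans
    (mul_le_mul_of_nonneg_right ?_ (quadEnergy_maternKernelOn_one_nonneg P w u hU hν l'_pos))
  gcongr
  exacts [hl'.2, hl.1, hl.2, hl'.1]

lemma quadEnergy_maternKernelOn_optimalWeights_le {m : ℕ} (w : Fin m → ℝ) {u : Fin m → U}
    (hU : MeasurableSet U) (hν : 0 < ν) (hη : 0 < η) (hl : 0 < l) (hu : Function.Injective u) :
    quadEnergy P (optimalWeights (maternKernelOn U ν η l) P u) u (maternKernelOn U ν 1 l) ≤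
      quadEnergy P w u (maternKernelOn U ν 1 l) := by
  have optimal := quadEnergy_optimalWeights_le P (continuous_maternKernelOn hν hl η).measurable
    (abs_maternKernelOn_le hν hl η) (maternKernelOn_comm hν hl η)
    (fun _ => quadEnergy_zero_maternKernelOn_pos hU hν hη hl hu) w
  rw [quadEnergy_maternKernelOn_eq_mul P _ u hν hl η,
    quadEnergy_maternKernelOn_eq_mul P w u hν hl η] at optimal
  exact le_of_mul_le_mul_left optimal hη

lemma quadEnergy_maternKernelOn_optimalWeights_le_of_mem_Icc {m : ℕ} (w : Fin m → ℝ)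
    {u : Fin m → U} {η' l' l₀ lmin lmax : ℝ} (hU : MeasurableSet U) (hν : 0 < ν) (hη : 0 < η)
    (hη' : 0 ≤ η') (hlmin : 0 < lmin) (hl : l ∈ Set.Icc lmin lmax) (hl' : l' ∈ Set.Icc lmin lmax)
    (hl₀ : l₀ ∈ Set.Icc lmin lmax) (hu : Function.Injective u) :
    quadEnergy P (optimalWeights (maternKernelOn U ν η l) P u) u (maternKernelOn U ν η' l') ≤
      η' * ((((lmax / lmin) ^ 2) ^ ν + ((lmax / lmin) ^ 2) ^ (s / 2 : ℝ)) ^ 2 *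
        quadEnergy P w u (maternKernelOn U ν 1 l₀)) := by
  set v := optimalWeights (maternKernelOn U ν η l) P u
  set F := ((lmax / lmin) ^ 2) ^ ν + ((lmax / lmin) ^ 2) ^ (s / 2 : ℝ)
  have : 0 ≤ F := by positivity
  rw [quadEnergy_maternKernelOn_eq_mul P v u hν (hlmin.trans_le hl'.1)]
  gcongr
  calc quadEnergy P v u (maternKernelOn U ν 1 l')
      ≤ F * quadEnergy P v u (maternKernelOn U ν 1 l) :=
        quadEnergy_maternKernelOn_one_le_of_mem_Icc P v u hU hν hlmin hl' hl
    _ ≤ F * quadEnergy P w u (maternKernelOn U ν 1 l) := by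
        gcongr
        exact quadEnergy_maternKernelOn_optimalWeights_le P w hU hν hη (hlmin.trans_le hl.1) hu
    _ ≤ F * (F * quadEnergy P w u (maternKernelOn U ν 1 l₀)) := by
        gcongr
        exact quadEnergy_maternKernelOn_one_le_of_mem_Icc P w u hU hν hlmin hl hl₀
    _ = F ^ 2 * quadEnergy P w u (maternKernelOn U ν 1 l₀) := by ring

end MaternKernelOn

section FillDistance

variable {s : ℕ} {U : Set (EuclideanSpace ℝ (Fin s))}

lemma exists_norm_sub_le_of_fillDistance_le (hU : Bornology.IsBounded U) {m : ℕ} (hm : 0 < m)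
    {u : Fin m → U} {h : ℝ} (hh : fillDistance U u ≤ h) {v : EuclideanSpace ℝ (Fin s)}
    (hv : v ∈ U) : ∃ i, ‖v - u i‖ ≤ h := by
  have : Nonempty (Fin m) := ⟨⟨0, hm⟩⟩
  obtain ⟨d, hd⟩ := hU.exists_norm_le
  have bddAbove_infDist : BddAbove (Set.range fun v : U => ⨅ i : Fin m, ‖v.1 - (u i).1‖) := by
    refine ⟨d + d, ?_⟩
    rintro _ ⟨v, rfl⟩
    exact (ciInf_le (Set.finite_range _).bddBelow ⟨0, hm⟩).trans
      (norm_sub_le_of_le (hd _ v.2) (hd _ (u _).2))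
  obtain ⟨i, hi⟩ := exists_eq_ciInf_of_finite (f := fun i : Fin m => ‖v - u i‖)
  exact ⟨i, hi.le.trans ((le_ciSup bddAbove_infDist ⟨v, hv⟩).trans hh)⟩

lemma mul_rpow_neg_inv_sq_rpow (hs : 0 < s) {x : ℝ} (hx : 0 ≤ x) (c ν : ℝ) :
    ((c * x ^ (-(1 : ℝ) / s)) ^ 2) ^ (ν + s / 2 : ℝ) =
      (c ^ 2) ^ (ν + s / 2 : ℝ) * (x ^ (-(ν / s) - 1 / 2)) ^ 2 := by
  rw [mul_pow, Real.mul_rpow (by positivity) (by positivity)]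
  simp only [← Real.rpow_mul_natCast hx, ← Real.rpow_mul hx]
  congr 2
  push_cast
  field

lemma one_le_rpow_sq_mul_rpow_neg_sq {x y p : ℝ} (hx : 0 < x) (hxy : x ≤ y) (hp : 0 ≤ p) :
    1 ≤ (y ^ p) ^ 2 * (x ^ (-p)) ^ 2 := by
  rw [← mul_pow, Real.rpow_neg hx.le, ← div_eq_mul_inv]
  refine one_le_pow₀ ((one_le_div (by positivity)).2 ?_)
  gcongr

lemma eventually_fillDistance_le {u : (m : ℕ) → Fin m → U} (hs : 0 < s)
    (hfill : (fun m => fillDistance U (u m)) =O[atTop] fun m : ℕ => (m : ℝ) ^ (-(1 : ℝ) / s)) :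
    ∃ c > 0, ∀ h₀ > 0, ∀ᶠ m : ℕ in atTop, fillDistance U (u m) ≤ c * (m : ℝ) ^ (-(1 : ℝ) / s) ∧
      c * (m : ℝ) ^ (-(1 : ℝ) / s) ≤ h₀ := by
  obtain ⟨c, c_pos, hc⟩ := hfill.exists_pos
  have tendsto_zero : Tendsto (fun m : ℕ => c * (m : ℝ) ^ (-(1 : ℝ) / s)) atTop (nhds 0) := by
    simpa [neg_div] using ((tendsto_rpow_neg_atTop (y := 1 / (s : ℝ)) (by positivity)).comp
      tendsto_natCast_atTop_atTop).const_mul c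
  refine ⟨c, c_pos, fun h₀ h₀_pos => ?_⟩
  filter_upwards [hc.bound, tendsto_zero.eventually (gt_mem_nhds h₀_pos)] with m hm hlt
  rw [Real.norm_of_nonneg (by positivity : (0 : ℝ) ≤ (m : ℝ) ^ (-(1 : ℝ) / s))] at hm
  exact ⟨(le_abs_self _).trans hm, hlt.le⟩

lemma map_subtype_coe_le_smul_volume (hU : MeasurableSet U) {P : Measure U} {C : NNReal}
    (hP : P ≤ C • Measure.comap Subtype.val volume) : P.map Subtype.val ≤ C • volume := by
  refine (Measure.map_mono hP measurable_subtype_coe).trans ?_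
  rw [Measure.map_smul, map_comap_subtype_coe hU]
  gcongr
  exact Measure.restrict_le_self

lemma exists_weights_quadEnergy_maternKernelOn_le (hs : 0 < s) (hUm : MeasurableSet U)
    (hUb : Bornology.IsBounded U) (hU : HasInteriorCorkscrew U) {P : Measure U} [IsFiniteMeasure P]
    {C : NNReal} (hP : P ≤ C • Measure.comap Subtype.val volume) {u : (m : ℕ) → Fin m → U}
    (hfill : (fun m => fillDistance U (u m)) =O[atTop] fun m : ℕ => (m : ℝ) ^ (-(1 : ℝ) / s))
    {ν l : ℝ} (hν : 0 < ν) (hl : 0 < l) :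
    ∃ K ≥ 0, ∀ m > 0, ∃ w : Fin m → ℝ, quadEnergy P w (u m) (maternKernelOn U ν 1 l) ≤
      K * ((m : ℝ) ^ (-(ν / s) - 1 / 2)) ^ 2 := by
  have hPU : ∀ᵐ x ∂(P.map ((↑) : U → EuclideanSpace ℝ (Fin s))), x ∈ U :=
    (ae_map_iff measurable_subtype_coe.aemeasurable hUm).2 (ae_of_all _ fun v => v.2)
  obtain ⟨h₀, h₀_pos, K, K_nonneg, exists_weights⟩ := exists_weights_quadEnergy_gammaMixKernel_le
    hU hPU (map_subtype_coe_le_smul_volume hUm hP) hν (a := ν / (2 * l ^ 2)) (by positivity)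
  obtain ⟨c, c_pos, hc⟩ := eventually_fillDistance_le hs hfill
  obtain ⟨m₁, hm₁⟩ := eventually_atTop.1 (hc h₀ h₀_pos)
  refine ⟨K * (c ^ 2) ^ (ν + s / 2 : ℝ) + P.real Set.univ ^ 2 * ((m₁ : ℝ) ^ (ν / s + 1 / 2)) ^ 2,
    by positivity, fun m m_pos => ?_⟩
  have : (0 : ℝ) < m := by exact_mod_cast m_pos
  rw [add_mul]
  rcases le_total m₁ m with hm | hm
  · obtain ⟨fill_le, le_h₀⟩ := hm₁ m hm
    obtain ⟨w, hw⟩ := exists_weights _ (by positivity) le_h₀ (fun i => (u m i).2) fun v hv =>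
      exists_norm_sub_le_of_fillDistance_le hUb m_pos fill_le hv
    refine ⟨w, le_add_of_le_of_nonneg ?_ (by positivity)⟩
    rw [quadEnergy_maternKernelOn_one P w (u m) hUm hν hl, mul_assoc,
      ← mul_rpow_neg_inv_sq_rpow hs (by positivity)]
    exact hw
  · refine ⟨0, le_add_of_nonneg_of_le (by positivity) ?_⟩
    calc quadEnergy P 0 (u m) (maternKernelOn U ν 1 l)
        ≤ P.real Set.univ ^ 2 := by
          simpa [quadMass] using (le_abs_self _).trans
            (abs_quadEnergy_le P 0 (u m) (abs_maternKernelOn_le hν hl 1))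
      _ ≤ P.real Set.univ ^ 2 *
            (((m₁ : ℝ) ^ (ν / s + 1 / 2)) ^ 2 * ((m : ℝ) ^ (-(ν / s + 1 / 2))) ^ 2) :=
          le_mul_of_one_le_right (by positivity)
            (one_le_rpow_sq_mul_rpow_neg_sq this (by exact_mod_cast hm) (by positivity))
      _ = P.real Set.univ ^ 2 * ((m₁ : ℝ) ^ (ν / s + 1 / 2)) ^ 2 *
            ((m : ℝ) ^ (-(ν / s) - 1 / 2)) ^ 2 := by rw [neg_add', mul_assoc]

end FillDistance

lemma withDensity_ofReal_le_smul {X : Type*} [MeasurableSpace X] {μ : Measure X} {f : X → ℝ} {C : ℝ}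
    (hf : ∀ x, f x ≤ C) :
    μ.withDensity (fun x => ENNReal.ofReal (f x)) ≤ C.toNNReal • μ :=
  (withDensity_mono (ae_of_all _ fun x => ENNReal.ofReal_le_ofReal (hf x))).trans_eq
    (withDensity_const _)

lemma isFiniteMeasure_of_le_smul_comap {s : ℕ} {U : Set (EuclideanSpace ℝ (Fin s))}
    (hUm : MeasurableSet U) (hUb : Bornology.IsBounded U) {P : Measure U} {C : NNReal}
    (hP : P ≤ C • Measure.comap Subtype.val volume) : IsFiniteMeasure P := by
  refine ⟨(hP Set.univ).trans_lt ?_⟩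
  rw [Measure.smul_apply, comap_subtype_coe_apply hUm, Subtype.coe_image_univ]
  exact ENNReal.mul_lt_top ENNReal.coe_lt_top hUb.measure_lt_top

theorem bq_optimal_weights_convergence_general
    {s : ℕ} (hs : 0 < s)
    (U : Set (EuclideanSpace ℝ (Fin s))) (hU_meas : MeasurableSet U)
    (hU_bdd : Bornology.IsBounded U) (hU : HasInteriorCorkscrew U)
    (𝕌 : Measure U) (C : NNReal)
    (h𝕌 : 𝕌 ≤ C • Measure.comap ((↑) : U → EuclideanSpace ℝ (Fin s)) volume)
    (M : ℕ) (hM : 0 < M)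
    (u : (m : ℕ) → Fin m → U)
    (hu_inj : ∀ m, M ≤ m → Function.Injective (u m))
    (hfill : (fun m : ℕ => fillDistance U (u m)) =O[atTop]
      fun m : ℕ => (m : ℝ) ^ (-(1 : ℝ) / s))
    (νc : ℝ) (hνc : 0 < νc)
    {B : Type*} (η ℓ : B → ℝ)
    (ηmax : ℝ) (hη : ∀ b, 0 < η b ∧ η b ≤ ηmax)
    (ℓmin ℓmax : ℝ) (hℓmin : 0 < ℓmin) (hℓ : ∀ b, ℓ b ∈ Set.Icc ℓmin ℓmax)
    (β : ℕ → B) :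
    ∃ C₀ : ℝ, ∀ m, M ≤ m → ∀ b : B,
      ∀ (H : Type*) [NormedAddCommGroup H] [InnerProductSpace ℝ H] [CompleteSpace H]
        [RKHS ℝ H U ℝ], HasReproducingKernel H (maternKernelOn U νc (η b) (ℓ b)) →
      ∀ f : H,
        Integrable (fun v => f v) 𝕌 ∧
        |(∫ v, f v ∂𝕌) -
            ∑ i, optimalWeights (maternKernelOn U νc (η (β m)) (ℓ (β m))) 𝕌 (u m) i * f (u m i)| ≤
          ‖f‖ * (C₀ * (m : ℝ) ^ (-(νc / s) - 1 / 2)) := by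
  have : IsFiniteMeasure 𝕌 := isFiniteMeasure_of_le_smul_comap hU_meas hU_bdd h𝕌
  have hℓ₀ : ℓmin ∈ Set.Icc ℓmin ℓmax := Set.left_mem_Icc.2 ((hℓ (β 0)).1.trans (hℓ (β 0)).2)
  have ηmax_nonneg : 0 ≤ ηmax := (hη (β 0)).1.le.trans (hη (β 0)).2
  obtain ⟨K, K_nonneg, exists_weights⟩ := exists_weights_quadEnergy_maternKernelOn_le hs hU_meas
    hU_bdd hU h𝕌 hfill hνc hℓmin
  set F := ((ℓmax / ℓmin) ^ 2) ^ νc + ((ℓmax / ℓmin) ^ 2) ^ (s / 2 : ℝ)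
  refine ⟨Real.sqrt (ηmax * (F ^ 2 * K)), fun m hm b H _ _ _ _ hH f => ?_⟩
  have kerFun_integrable := integrable_kerFun_one hH
    (continuous_maternKernelOn hνc (hℓmin.trans_le (hℓ b).1) (η b))
    (fun x => (le_abs_self _).trans
      (abs_maternKernelOn_le hνc (hℓmin.trans_le (hℓ b).1) (η b) x x)) 𝕌
  refine ⟨integrable_coe_of_integrable_kerFun_one kerFun_integrable f,
    (abs_quadErr_le_norm_mul_sqrt_quadEnergy hH kerFun_integrable _ (u m) f).trans ?_⟩
  obtain ⟨w, energy_le⟩ := exists_weights m (hM.trans_le hm)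
  gcongr
  refine Real.sqrt_le_iff.2 ⟨by positivity, ?_⟩
  rw [mul_pow, Real.sq_sqrt (by positivity), mul_assoc, mul_assoc]
  refine (quadEnergy_maternKernelOn_optimalWeights_le_of_mem_Icc 𝕌 w hU_meas hνc (hη (β m)).1
    (hη b).1.le hℓmin (hℓ (β m)) (hℓ b) hℓ₀ (hu_inj m hm)).trans ?_
  have energy_nonneg := quadEnergy_maternKernelOn_one_nonneg 𝕌 w (u m) hU_meas hνc hℓmin
  have := (hη b).2
  gcongr

theorem bq_optimal_weights_convergence
    {s : ℕ} (hs : 0 < s)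
    (U : Set (EuclideanSpace ℝ (Fin s)))
    (hU_conv : Convex ℝ U) (hU_open : IsOpen U) (hU_bdd : Bornology.IsBounded U)
    -- the probability measure on `U` and its bounded density
    (𝕌 : Measure U) [IsProbabilityMeasure 𝕌]
    (f𝕌 : U → ℝ) (hf𝕌_meas : Measurable f𝕌)
    (C𝕌' : ℝ) (hC𝕌' : 0 < C𝕌') (hf𝕌 : ∀ v, f𝕌 v ∈ Set.Icc (0 : ℝ) C𝕌')
    (h𝕌 : 𝕌 = (Measure.comap ((↑) : U → EuclideanSpace ℝ (Fin s)) volume).withDensity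
      fun v => ENNReal.ofReal (f𝕌 v))
    -- for every `m ≥ M`, a set of `m` points with fill distance `O(m^(-1/s))`
    (M : ℕ) (hM : 0 < M)
    (u : (m : ℕ) → Fin m → U)
    (hu_inj : ∀ m, M ≤ m → Function.Injective (u m))
    (hfill : (fun m : ℕ => fillDistance U (u m)) =O[atTop]
      fun m : ℕ => (m : ℝ) ^ (-(1 : ℝ) / s))
    -- the family of Matérn kernels of order `νc` and the parameters `β m` that are used
    (νc : ℝ) (hνc : 0 < νc)
    {B : Type*} (η ℓ : B → ℝ)
    (ηmax : ℝ) (hη : ∀ b, 0 < η b ∧ η b ≤ ηmax)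
    (ℓmin ℓmax : ℝ) (hℓmin : 0 < ℓmin) (hℓ : ∀ b, ℓ b ∈ Set.Icc ℓmin ℓmax)
    (β : ℕ → B) :
    ∃ C₀ : ℝ, ∀ m, M ≤ m → ∀ b : B,
      ∀ (H : Type*) [NormedAddCommGroup H] [InnerProductSpace ℝ H] [CompleteSpace H]
        [RKHS ℝ H U ℝ], HasReproducingKernel H (maternKernelOn U νc (η b) (ℓ b)) →
      ∀ f : H, ‖f‖ = 1 →
        Integrable (fun v => f v) 𝕌 ∧
        |(∫ v, f v ∂𝕌) -
            ∑ i, optimalWeights (maternKernelOn U νc (η (β m)) (ℓ (β m))) 𝕌 (u m) i * f (u m i)| ≤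
          C₀ * (m : ℝ) ^ (-(νc / s) - 1 / 2) := by
  have interior_nonempty : (interior U).Nonempty := by
    rw [hU_open.interior_eq]
    exact Set.nonempty_coe_sort.1 (nonempty_of_isProbabilityMeasure 𝕌)
  obtain ⟨C₀, error_le⟩ := bq_optimal_weights_convergence_general hs U hU_open.measurableSet hU_bdd
    (hasInteriorCorkscrew_of_convex hU_conv hU_bdd interior_nonempty) 𝕌 C𝕌'.toNNReal
    (h𝕌.trans_le (withDensity_ofReal_le_smul fun v => (hf𝕌 v).2)) M hM u hu_inj hfill νc hνc η ℓ
    ηmax hη ℓmin ℓmax hℓmin hℓ β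
  refine ⟨C₀, fun m hm b H _ _ _ _ hH f hf => ?_⟩
  simpa only [hf, one_mul] using error_le m hm b H hH f
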